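/- Let Ω ⊂ ℂⁿ be a bounded open set with a smooth real-valued defining function r on an open neighborhood of the closure of Ω, i.e. Ω = {r < 0} and ∇r ≠ 0 on {r = 0}. Let 1 ≤ q ≤ n and s ∈ (0,1), and suppose there is c > 0 such that i∂∂̄(−(−r)^s)(u,u)(z) ≥ c·(−r(z))^s·|u|² for every z ∈ Ω and every (0,q)-coefficient system u. Then there exists C > 0 such that for every smooth (0,q)-form u with compactly supported coefficients on Ω: ∫_Ω (−r)^{s−2} Σ'_{|J|=q−1} |Σ_{l=1}^n (∂r/∂z_l) u_{lJ}|² dV ≤ C ( ∫_Ω (−r)^s |∂̄u|² dV + ∫_Ω (−r)^s |ϑu|² dV ). (This is the ∂̄-Hardy inequality of Proposition 3.3 for compactly supported forms.) -/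

import Mathlib

open scoped BigOperators
open MeasureTheory

namespace HM

/-- The finset of strictly increasing multi-indices of length `q` with entries in `Fin n`. -/
def Incr (n q : ℕ) : Finset (Fin q → Fin n) :=
  Finset.univ.filter (fun I => ∀ a b : Fin q, a < b → I a < I b)

/-- Prepend the index `k` to a `(q-1)`-tuple `J`, giving the `q`-tuple `kJ`. -/
def cons' {n : ℕ} (q : ℕ) (k : Fin n) (J : Fin (q - 1) → Fin n) : Fin q → Fin n :=
  fun i => if h : (i : ℕ) = 0 then k else J ⟨(i : ℕ) - 1, by have := i.isLt; omega⟩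

/-- A (0,q)-coefficient system: an antisymmetric assignment of complex numbers to q-tuples
(hence vanishing on tuples with a repeated index). -/
def IsCoeff {n q : ℕ} (u : (Fin q → Fin n) → ℂ) : Prop :=
  ∀ (σ : Equiv.Perm (Fin q)) (I : Fin q → Fin n),
    u (I ∘ σ) = ((Equiv.Perm.sign σ : ℤ) : ℂ) * u I

/-- `|u|²`, the sum of `|u_I|²` over strictly increasing multi-indices `I`. -/
noncomputable def nSq {n q : ℕ} (u : (Fin q → Fin n) → ℂ) : ℝ :=
  ∑ I ∈ Incr n q, ‖u I‖ ^ 2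

/-- The Hessian form of a matrix `H` on coefficient systems:
`H(u,v) = Σ'_{|J|=q-1} Σ_{k,l} H_{lk} u_{lJ} conj(v_{kJ})`. -/
noncomputable def mForm {n : ℕ} (q : ℕ) (H : Matrix (Fin n) (Fin n) ℂ)
    (u v : (Fin q → Fin n) → ℂ) : ℂ :=
  ∑ J ∈ Incr n (q - 1), ∑ k : Fin n, ∑ l : Fin n,
    H l k * u (cons' q l J) * star (v (cons' q k J))

/-- `σ^I_J`: the sign of the permutation rearranging `I` into `J`; `0` if `J` is not a
rearrangement of `I` (in particular `0` if `I` has a repeated entry). -/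
def permSign {n p : ℕ} (I J : Fin p → Fin n) : ℤ :=
  if Function.Injective I then
    ∑ π : Equiv.Perm (Fin p), if J = I ∘ π then ((Equiv.Perm.sign π : ℤ)) else 0
  else 0

/-- The Wirtinger derivative `∂f/∂z_k` of a complex-valued function, via real Fréchet
derivatives: `½(∂f/∂x_k − i ∂f/∂y_k)`. -/
noncomputable def dz {n : ℕ} (f : (Fin n → ℂ) → ℂ) (k : Fin n) (z : Fin n → ℂ) : ℂ :=
  (1/2 : ℂ) * (fderiv ℝ f z (Pi.single k 1) - Complex.I * fderiv ℝ f z (Pi.single k Complex.I))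

/-- The Wirtinger derivative `∂f/∂z̄_k`: `½(∂f/∂x_k + i ∂f/∂y_k)`. -/
noncomputable def dzbar {n : ℕ} (f : (Fin n → ℂ) → ℂ) (k : Fin n) (z : Fin n → ℂ) : ℂ :=
  (1/2 : ℂ) * (fderiv ℝ f z (Pi.single k 1) + Complex.I * fderiv ℝ f z (Pi.single k Complex.I))

/-- The mixed Wirtinger Hessian `∂²f/∂z_l∂z̄_k` of a real-valued function. -/
noncomputable def hessW {n : ℕ} (f : (Fin n → ℂ) → ℝ) (l k : Fin n) (z : Fin n → ℂ) : ℂ :=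
  dz (fun w => dzbar (fun y => (f y : ℂ)) k w) l z

/-- The Hessian form `i∂∂̄f(u,u)(z) = Σ'_{|J|=q-1} Σ_{k,l} ∂²f/∂z_l∂z̄_k(z) u_{lJ} conj(u_{kJ})`. -/
noncomputable def hForm {n : ℕ} (q : ℕ) (f : (Fin n → ℂ) → ℝ)
    (u : (Fin q → Fin n) → ℂ) (z : Fin n → ℂ) : ℂ :=
  ∑ J ∈ Incr n (q - 1), ∑ k : Fin n, ∑ l : Fin n,
    hessW f l k z * u (cons' q l J) * star (u (cons' q k J))

/-- Coefficient of `∂̄u` on the `(q+1)`-tuple `M`: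
`(∂̄u)_M = Σ_k Σ'_{|J|=q} σ^{kJ}_M ∂u_J/∂z̄_k`. -/
noncomputable def dbarC {n : ℕ} (q : ℕ) (u : (Fin q → Fin n) → (Fin n → ℂ) → ℂ)
    (M : Fin (q + 1) → Fin n) (z : Fin n → ℂ) : ℂ :=
  ∑ k : Fin n, ∑ J ∈ Incr n q, ((permSign (cons' (q + 1) k J) M : ℤ) : ℂ) * dzbar (u J) k z

/-- Coefficient of `ϑu` on the `(q-1)`-tuple `J`: `(ϑu)_J = −Σ_l ∂u_{lJ}/∂z_l`. -/
noncomputable def thetaC {n : ℕ} (q : ℕ) (u : (Fin q → Fin n) → (Fin n → ℂ) → ℂ)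
    (J : Fin (q - 1) → Fin n) (z : Fin n → ℂ) : ℂ :=
  -∑ l : Fin n, dz (u (cons' q l J)) l z

/-- Pointwise `|∂̄u|²`. -/
noncomputable def dbarSq {n : ℕ} (q : ℕ) (u : (Fin q → Fin n) → (Fin n → ℂ) → ℂ)
    (z : Fin n → ℂ) : ℝ :=
  ∑ M ∈ Incr n (q + 1), ‖dbarC q u M z‖ ^ 2

/-- Pointwise `|ϑu|²`. -/
noncomputable def thetaSq {n : ℕ} (q : ℕ) (u : (Fin q → Fin n) → (Fin n → ℂ) → ℂ)
    (z : Fin n → ℂ) : ℝ :=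
  ∑ J ∈ Incr n (q - 1), ‖thetaC q u J z‖ ^ 2

/-- Remove the `i`-th entry of a `j`-tuple, giving a `(j-1)`-tuple. -/
def removeIdx {n j : ℕ} (I : Fin j → Fin n) (i : Fin j) : Fin (j - 1) → Fin n :=
  fun t => if (t : ℕ) < (i : ℕ) then I ⟨t, by have := t.isLt; omega⟩
    else I ⟨(t : ℕ) + 1, by have := t.isLt; omega⟩

/-- The increasing `j`-tuple listing a finset `S` (with default `d` out of range). -/
def sortedTuple {n : ℕ} (j : ℕ) (S : Finset (Fin n)) (d : Fin n) : Fin j → Fin n :=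
  fun t => (S.sort (· ≤ ·)).getD t d

end HM

/-!
Write `t = -r` on `Ω`, and let `∂r ⌟ u` be the contraction whose square is to be bounded. The
complex Hessian of `-t^s` is `s t^(s-1) ∂∂̄r + s(1-s) t^(s-2) ∂r ∧ ∂̄r`. On a form `v` with
`∂r ⌟ v = 0` only the first term survives, so the hypothesis makes `∂∂̄r` nonnegative on such `v`;
on every `u` the second term contributes `s(1-s) t^(s-2) |∂r ⌟ u|²`.
Splitting `u` into such a `v` and a remainder bounded by `|∂r ⌟ u|`, the first term is at least
`-G t^(s-1) |∂r ⌟ u| |u|`, which is absorbed by the second term and the hypothesis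
`i∂∂̄(-t^s)(u,u) ≥ c t^s |u|²`. Hence `t^(s-2) |∂r ⌟ u|² ≤ M · i∂∂̄(-t^s)(u,u)` where `∂r` is
bounded away from zero; elsewhere `t` is bounded below and the hypothesis alone suffices.

The Kohn–Morrey–Hörmander identity with weight `-t^s` bounds `i∂∂̄(-t^s)(u,u)` pointwise by
`t^s (|∂̄u|² + |ϑu|²)`, a cross term `2 s t^(s-1) Re ⟨∂r ⌟ u, ϑu⟩` absorbed by Young's inequality,
and a divergence that integrates to zero.
-/

namespace HM

open Equiv Function Topology

/-! ### Sums over multi-indices -/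

section MultiIndex

variable {n q : ℕ}

lemma mem_Incr_iff {I : Fin q → Fin n} : I ∈ Incr n q ↔ StrictMono I := by
  simp [Incr, StrictMono]

lemma strictMono_comp_sort {I : Fin q → Fin n} (hI : Injective I) :
    StrictMono (I ∘ Tuple.sort I) :=
  (Tuple.monotone_sort I).strictMono_of_injective (hI.comp (Tuple.sort I).injective)

lemma cons'_succ (k : Fin n) (J : Fin q → Fin n) : cons' (q + 1) k J = Fin.cons k J := by
  funext i
  cases i using Fin.cases <;> simp [cons']

lemma sum_fin_cons {A : Type*} [AddCommMonoid A] (F : (Fin (q + 1) → Fin n) → A) :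
    ∑ I, F I = ∑ k, ∑ J : Fin q → Fin n, F (Fin.cons k J) := by
  rw [← (Fin.consEquiv fun _ => Fin n).sum_comp, Fintype.sum_prod_type]
  rfl

lemma sum_comp_perm {A : Type*} [AddCommMonoid A] (σ : Perm (Fin q))
    (F : (Fin q → Fin n) → A) : ∑ I : Fin q → Fin n, F (I ∘ σ) = ∑ I, F I :=
  (σ.symm.arrowCongr (Equiv.refl (Fin n))).sum_comp F

lemma sum_injective_eq_sum_perm_Incr {A : Type*} [AddCommMonoid A] (F : (Fin q → Fin n) → A) :
    ∑ I with Injective I, F I = ∑ σ : Perm (Fin q), ∑ I ∈ Incr n q, F (I ∘ σ) := by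
  rw [← Finset.sum_product']
  symm
  refine Finset.sum_bij (fun x _ => x.2 ∘ x.1) ?_ ?_ ?_ fun _ _ => rfl
  · rintro ⟨σ, I⟩ h
    simp only [Finset.mem_product, mem_Incr_iff] at h
    simpa using h.2.injective
  · rintro ⟨σ, I⟩ h ⟨τ, K⟩ h' e
    simp only [Finset.mem_product, mem_Incr_iff] at h h' e
    obtain rfl : I = K := (h.2.range_inj h'.2).1 <| by
      rw [← σ.surjective.range_comp I, e, τ.surjective.range_comp K]
    obtain rfl : σ = τ := Equiv.ext fun i => h.2.injective (congrFun e i)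
    rfl
  · intro I hI
    have hI : Injective I := by simpa using hI
    refine ⟨((Tuple.sort I)⁻¹, I ∘ Tuple.sort I), ?_, ?_⟩
    · simpa [mem_Incr_iff] using strictMono_comp_sort hI
    · funext i
      simp

lemma sum_eq_factorial_nsmul_sum_Incr {A : Type*} [AddCommMonoid A]
    {F : (Fin q → Fin n) → A} (hF : ∀ (σ : Perm (Fin q)) I, F (I ∘ σ) = F I)
    (h0 : ∀ I, ¬Injective I → F I = 0) :
    ∑ I, F I = q.factorial • ∑ I ∈ Incr n q, F I := by
  have hinj : ∑ I, F I = ∑ I with Injective I, F I := by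
    refine (Finset.sum_subset (Finset.filter_subset _ _) fun I _ hI => h0 I ?_).symm
    simpa using hI
  simp [hinj, sum_injective_eq_sum_perm_Incr, hF, Fintype.card_perm]

lemma nSq_nonneg (u : (Fin q → Fin n) → ℂ) : 0 ≤ nSq u :=
  Finset.sum_nonneg fun _ _ => by positivity

lemma nSq_le_card_mul_norm_sq (u : (Fin q → Fin n) → ℂ) : nSq u ≤ (Incr n q).card * ‖u‖ ^ 2 := by
  rw [← nsmul_eq_mul]
  refine Finset.sum_le_card_nsmul _ _ _ fun I _ => ?_
  gcongr
  exact norm_le_pi_norm u I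

lemma sign_mul_sign_self (σ : Perm (Fin q)) :
    ((Perm.sign σ : ℤ) : ℂ) * ((Perm.sign σ : ℤ) : ℂ) = 1 :=
  mod_cast Int.units_coe_mul_self (Perm.sign σ)

namespace IsCoeff

variable {u v : (Fin q → Fin n) → ℂ}

lemma eq_zero_of_not_injective (hu : IsCoeff u) {I : Fin q → Fin n} (hI : ¬Injective I) :
    u I = 0 := by
  obtain ⟨a, b, hab, hne⟩ := not_injective_iff.1 hI
  have hI' : I ∘ swap a b = I := by
    rw [comp_swap_eq_update, hab, update_eq_self, ← hab, update_eq_self]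
  have h := hu (swap a b) I
  rw [hI', Perm.sign_swap hne] at h
  simpa [self_eq_neg] using h

lemma mul_star_comp (hu : IsCoeff u) (hv : IsCoeff v) (σ : Perm (Fin q))
    (I J : Fin q → Fin n) : u (I ∘ σ) * star (v (J ∘ σ)) = u I * star (v J) := by
  rw [hu, hv, star_mul', star_intCast]
  linear_combination u I * star (v J) * sign_mul_sign_self σ

lemma norm_comp (hu : IsCoeff u) (σ : Perm (Fin q)) (I : Fin q → Fin n) :
    ‖u (I ∘ σ)‖ = ‖u I‖ := by
  rw [hu, norm_mul]
  rcases Int.units_eq_one_or (Perm.sign σ) with h | h <;> simp [h]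

lemma sub (hu : IsCoeff u) (hv : IsCoeff v) : IsCoeff (u - v) := fun σ I => by
  simp only [Pi.sub_apply, hu σ I, hv σ I, mul_sub]

lemma const_smul (hu : IsCoeff u) (a : ℂ) : IsCoeff (a • u) := fun σ I => by
  simp only [Pi.smul_apply, smul_eq_mul, hu σ I, mul_left_comm]

lemma sum_mul_star (hu : IsCoeff u) (hv : IsCoeff v) :
    ∑ I, u I * star (v I) = (q.factorial : ℂ) * ∑ I ∈ Incr n q, u I * star (v I) := by
  rw [sum_eq_factorial_nsmul_sum_Incr (fun σ I => hu.mul_star_comp hv σ I I) fun I hI => by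
    rw [hu.eq_zero_of_not_injective hI, zero_mul], nsmul_eq_mul]

lemma norm_sq_le_nSq (hu : IsCoeff u) : ‖u‖ ^ 2 ≤ nSq u := by
  rw [← Real.le_sqrt (norm_nonneg _) (nSq_nonneg u), pi_norm_le_iff_of_nonneg (Real.sqrt_nonneg _)]
  intro I
  by_cases hI : Injective I
  · rw [← hu.norm_comp (Tuple.sort I)]
    exact Real.le_sqrt_of_sq_le <| Finset.single_le_sum (f := fun J => ‖u J‖ ^ 2)
      (fun J _ => by positivity) (mem_Incr_iff.2 (strictMono_comp_sort hI))
  · rw [hu.eq_zero_of_not_injective hI, norm_zero]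
    positivity

end IsCoeff

end MultiIndex

/-! ### Alternation -/

section Alternation

variable {n q : ℕ} {W : Fin n → (Fin q → Fin n) → ℂ}

/-- The antisymmetrization of `(k, J) ↦ W k J` over all `q + 1` slots, when `W k` is antisymmetric
for every `k`. For `W k J = ∂u_J/∂z̄_k` it is `∂̄u`, and for `W k J = η k * w J` it is `η ∧ w`. -/
noncomputable def alternate (W : Fin n → (Fin q → Fin n) → ℂ) (M : Fin (q + 1) → Fin n) : ℂ :=
  W (M 0) (Fin.tail M) - ∑ j, W (M j.succ) (update (Fin.tail M) j (M 0))

lemma alternate_cons (k : Fin n) (J : Fin q → Fin n) :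
    alternate W (Fin.cons k J) = W k J - ∑ j, W (J j) (update J j k) := by
  simp [alternate]

lemma tail_comp_swap (M : Fin (q + 1) → Fin n) (j : Fin q) :
    Fin.tail (M ∘ swap 0 j.succ) = update (Fin.tail M) j (M 0) := by
  rw [comp_swap_eq_update, Fin.tail_update_zero, Fin.tail_update_succ]

lemma tail_comp_decomposeFin_symm (M : Fin (q + 1) → Fin n) (j : Fin (q + 1))
    (e : Perm (Fin q)) :
    Fin.tail (M ∘ Perm.decomposeFin.symm (j, e)) = Fin.tail (M ∘ swap 0 j) ∘ e := by
  funext i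
  simp [Fin.tail]

lemma sum_sign_mul_comp_perm (hW : ∀ k, IsCoeff (W k)) (M : Fin (q + 1) → Fin n) :
    ∑ π : Perm (Fin (q + 1)), ((Perm.sign π : ℤ) : ℂ) * W ((M ∘ π) 0) (Fin.tail (M ∘ π)) =
      q.factorial * alternate W M := by
  have hterm (j : Fin (q + 1)) (e : Perm (Fin q)) :
      ((Perm.sign (Perm.decomposeFin.symm (j, e)) : ℤ) : ℂ) *
          W ((M ∘ Perm.decomposeFin.symm (j, e)) 0)
            (Fin.tail (M ∘ Perm.decomposeFin.symm (j, e))) =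
        (if j = 0 then 1 else -1) * W (M j) (Fin.tail (M ∘ swap 0 j)) := by
    rw [tail_comp_decomposeFin_symm, hW, Perm.decomposeFin.symm_sign, comp_apply,
      Perm.decomposeFin_symm_apply_zero]
    split_ifs <;> push_cast
    · linear_combination W (M j) (Fin.tail (M ∘ swap 0 j)) * sign_mul_sign_self e
    · linear_combination -W (M j) (Fin.tail (M ∘ swap 0 j)) * sign_mul_sign_self e
  rw [← Perm.decomposeFin.symm.sum_comp, Fintype.sum_prod_type]
  simp only [hterm, Finset.sum_const, Finset.card_univ, Fintype.card_perm, Fintype.card_fin,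
    nsmul_eq_mul, ← Finset.mul_sum]
  simp [Fin.sum_univ_succ, Fin.succ_ne_zero, tail_comp_swap, alternate, sub_eq_add_neg]

lemma isCoeff_alternate (hW : ∀ k, IsCoeff (W k)) : IsCoeff (alternate W) := by
  intro σ M
  refine mul_left_cancel₀ (Nat.cast_ne_zero.2 q.factorial_ne_zero : (q.factorial : ℂ) ≠ 0) ?_
  rw [← sum_sign_mul_comp_perm hW, mul_left_comm, ← sum_sign_mul_comp_perm hW, Finset.mul_sum,
    ← Equiv.sum_comp (Equiv.mulLeft σ) fun π => _ * (_ * _)]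
  refine Finset.sum_congr rfl fun π _ => ?_
  simp only [coe_mulLeft, Perm.sign_mul, Perm.coe_mul, comp_assoc, Units.val_mul, Int.cast_mul]
  linear_combination (-((Perm.sign π : ℤ) : ℂ) * W ((M ∘ σ ∘ π) 0) (Fin.tail (M ∘ σ ∘ π))) *
    sign_mul_sign_self σ

lemma permSign_of_injective (I : Fin q → Fin n) {M : Fin q → Fin n} (hM : Injective M) :
    permSign I M = ∑ π : Perm (Fin q), if M = I ∘ π then (Perm.sign π : ℤ) else 0 := by
  refine ite_eq_left_iff.2 fun hI => (Finset.sum_eq_zero fun π _ => if_neg ?_).symm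
  rintro rfl
  exact hI (by simpa [comp_assoc] using hM.comp π.symm.injective)

lemma sum_permSign_mul (F : (Fin q → Fin n) → ℂ) {M : Fin q → Fin n} (hM : Injective M) :
    ∑ I, (permSign I M : ℂ) * F I = ∑ π : Perm (Fin q), ((Perm.sign π : ℤ) : ℂ) * F (M ∘ π) := by
  simp only [permSign_of_injective _ hM, Int.cast_sum, Finset.sum_mul]
  rw [Finset.sum_comm, ← Equiv.sum_comp (Equiv.inv (Perm (Fin q)))]
  refine Finset.sum_congr rfl fun π _ => ?_
  have hiff (I : Fin q → Fin n) : M = I ∘ π.symm ↔ I = M ∘ π :=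
    eq_comm.trans (π.comp_symm_eq M I)
  simp [hiff, ite_mul]

lemma permSign_comp (I : Fin q → Fin n) {M : Fin q → Fin n} (hM : Injective M)
    (σ : Perm (Fin q)) : permSign (I ∘ σ) M = Perm.sign σ * permSign I M := by
  rw [permSign_of_injective _ hM, permSign_of_injective _ hM, Finset.mul_sum,
    ← Equiv.sum_comp (Equiv.mulLeft σ) fun π => _ * ite _ _ _]
  refine Finset.sum_congr rfl fun π _ => ?_
  simp only [coe_mulLeft, Perm.sign_mul, Perm.coe_mul, comp_assoc, mul_ite, mul_zero,
    Units.val_mul, ← mul_assoc, Int.units_coe_mul_self, one_mul]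

lemma cons_comp_perm (k : Fin n) (J : Fin q → Fin n) (σ : Perm (Fin q)) :
    (Fin.cons k (J ∘ σ) : Fin (q + 1) → Fin n) =
      (Fin.cons k J : Fin (q + 1) → Fin n) ∘ Perm.decomposeFin.symm (0, σ) := by
  funext i
  cases i using Fin.cases <;> simp

lemma IsCoeff.cons {B : (Fin (q + 1) → Fin n) → ℂ} (hB : IsCoeff B) (k : Fin n) :
    IsCoeff fun J : Fin q → Fin n => B (Fin.cons k J) := fun σ J => by
  simp [cons_comp_perm, hB (Perm.decomposeFin.symm (0, σ)), Perm.decomposeFin.symm_sign]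

lemma sum_permSign_cons_eq_alternate (hW : ∀ k, IsCoeff (W k)) {M : Fin (q + 1) → Fin n}
    (hM : Injective M) :
    ∑ k, ∑ J ∈ Incr n q, (permSign (Fin.cons k J : Fin (q + 1) → Fin n) M : ℂ) * W k J =
      alternate W M := by
  refine mul_left_cancel₀ (Nat.cast_ne_zero.2 q.factorial_ne_zero : (q.factorial : ℂ) ≠ 0) ?_
  rw [← sum_sign_mul_comp_perm hW,
    ← sum_permSign_mul (fun I => W (I 0) (Fin.tail I)) hM, sum_fin_cons, Finset.mul_sum]
  refine Finset.sum_congr rfl fun k _ => ?_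
  simp only [Fin.cons_zero, Fin.tail_cons]
  rw [sum_eq_factorial_nsmul_sum_Incr, nsmul_eq_mul]
  · intro σ J
    rw [cons_comp_perm, permSign_comp _ hM, hW, Perm.decomposeFin.symm_sign]
    push_cast
    simp only [if_true, Units.val_one, Int.cast_one, one_mul]
    linear_combination (permSign (Fin.cons k J : Fin (q + 1) → Fin n) M : ℂ) * W k J *
      sign_mul_sign_self σ
  · intro J hJ
    rw [(hW k).eq_zero_of_not_injective hJ, mul_zero]

lemma sum_Incr_alternate_mul_star (hW : ∀ k, IsCoeff (W k)) {B : (Fin (q + 1) → Fin n) → ℂ}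
    (hB : IsCoeff B) :
    ∑ M ∈ Incr n (q + 1), alternate W M * star (B M) =
      ∑ k, ∑ J ∈ Incr n q, W k J * star (B (Fin.cons k J)) := by
  have hswap (j : Fin q) :
      ∑ M, W (M j.succ) (update (Fin.tail M) j (M 0)) * star (B M) =
        -∑ M, W (M 0) (Fin.tail M) * star (B M) := by
    rw [← sum_comp_perm (swap 0 j.succ) fun M => W (M 0) (Fin.tail M) * star (B M),
      ← Finset.sum_neg_distrib]
    refine Finset.sum_congr rfl fun M _ => ?_
    rw [tail_comp_swap, hB, Perm.sign_swap (Fin.succ_ne_zero j).symm]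
    simp
  have hall : ∑ M, alternate W M * star (B M) =
      (q + 1) * ∑ M, W (M 0) (Fin.tail M) * star (B M) := by
    simp only [alternate, sub_mul, Finset.sum_mul, Finset.sum_sub_distrib]
    rw [Finset.sum_comm, Finset.sum_congr rfl fun j _ => hswap j]
    simp
    ring
  refine mul_left_cancel₀ (Nat.cast_ne_zero.2 (q + 1).factorial_ne_zero :
    ((q + 1).factorial : ℂ) ≠ 0) ?_
  rw [← (isCoeff_alternate hW).sum_mul_star hB, hall, sum_fin_cons, Nat.factorial_succ,
    Finset.mul_sum, Finset.mul_sum]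
  refine Finset.sum_congr rfl fun k _ => ?_
  simp only [Fin.cons_zero, Fin.tail_cons]
  rw [(hW k).sum_mul_star (hB.cons k)]
  push_cast
  ring

lemma mul_star_update_comp {p : ℕ} {f : (Fin p → Fin n) → ℂ}
    {W : Fin n → (Fin p → Fin n) → ℂ} (hf : IsCoeff f) (hW : ∀ k, IsCoeff (W k)) (k : Fin n)
    (σ : Perm (Fin p)) (J : Fin p → Fin n) (j : Fin p) :
    f (J ∘ σ) * star (W ((J ∘ σ) j) (update (J ∘ σ) j k)) =
      f J * star (W (J (σ j)) (update J (σ j) k)) := by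
  have h : update (J ∘ σ) j k = update J (σ j) k ∘ σ := by simp [update_comp_equiv]
  exact h ▸ hf.mul_star_comp (hW (J (σ j))) σ J _

lemma sum_Incr_mul_star_update {p : ℕ} {f : (Fin (p + 1) → Fin n) → ℂ}
    {W : Fin n → (Fin (p + 1) → Fin n) → ℂ} (hf : IsCoeff f) (hW : ∀ k, IsCoeff (W k))
    (k : Fin n) :
    ∑ J ∈ Incr n (p + 1), ∑ j, f J * star (W (J j) (update J j k)) =
      ∑ K ∈ Incr n p, ∑ l, f (Fin.cons l K) * star (W l (Fin.cons k K)) := by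
  have hfront (j : Fin (p + 1)) : ∑ J, f J * star (W (J j) (update J j k)) =
      ∑ l, ∑ K : Fin p → Fin n, f (Fin.cons l K) * star (W l (Fin.cons k K)) := by
    rw [← sum_comp_perm (swap 0 j)]
    simp only [mul_star_update_comp hf hW, swap_apply_right]
    rw [sum_fin_cons]
    simp [Fin.update_cons_zero]
  have hall : ∑ J, ∑ j, f J * star (W (J j) (update J j k)) =
      (p + 1).factorial * ∑ J ∈ Incr n (p + 1), ∑ j, f J * star (W (J j) (update J j k)) := by
    rw [sum_eq_factorial_nsmul_sum_Incr, nsmul_eq_mul]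
    · intro σ J
      simp only [mul_star_update_comp hf hW]
      exact Equiv.sum_comp σ fun j => f J * star (W (J j) (update J j k))
    · intro J hJ
      simp [hf.eq_zero_of_not_injective hJ]
  refine mul_left_cancel₀ (Nat.cast_ne_zero.2 (p + 1).factorial_ne_zero :
    ((p + 1).factorial : ℂ) ≠ 0) ?_
  rw [← hall, Finset.sum_comm, Finset.sum_congr rfl fun j _ => hfront j,
    Finset.sum_comm (s := Incr n p)]
  simp only [(hf.cons _).sum_mul_star ((hW _).cons _), ← Finset.mul_sum]
  simp [Nat.factorial_succ, mul_assoc, mul_left_comm]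

lemma nSq_alternate {p : ℕ} {W : Fin n → (Fin (p + 1) → Fin n) → ℂ}
    (hW : ∀ k, IsCoeff (W k)) :
    (nSq (alternate W) : ℂ) = ∑ k, (nSq (W k) : ℂ) -
      ∑ K ∈ Incr n p, ∑ k, ∑ l, W k (Fin.cons l K) * star (W l (Fin.cons k K)) := by
  have hnSq {m : ℕ} (u : (Fin m → Fin n) → ℂ) :
      (nSq u : ℂ) = ∑ I ∈ Incr n m, u I * star (u I) := by
    simp [nSq, Complex.mul_conj']
  rw [hnSq, sum_Incr_alternate_mul_star hW (isCoeff_alternate hW), Finset.sum_comm (s := Incr n p),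
    ← Finset.sum_sub_distrib]
  refine Finset.sum_congr rfl fun k _ => ?_
  rw [← sum_Incr_mul_star_update (hW k) hW, hnSq, ← Finset.sum_sub_distrib]
  simp only [alternate_cons, star_sub, star_sum, mul_sub, Finset.mul_sum]

lemma neg_re_sum_le_nSq_alternate {p : ℕ} {W : Fin n → (Fin (p + 1) → Fin n) → ℂ}
    (hW : ∀ k, IsCoeff (W k)) :
    -(∑ K ∈ Incr n p, ∑ k, ∑ l, W k (Fin.cons l K) * star (W l (Fin.cons k K))).re ≤
      nSq (alternate W) := by
  have h := congrArg Complex.re (nSq_alternate hW)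
  simp only [Complex.sub_re, Complex.re_sum, Complex.ofReal_re] at h
  have hnn : 0 ≤ ∑ k, nSq (W k) :=
    Finset.sum_nonneg fun k _ => nSq_nonneg _
  simp only [Complex.re_sum]
  linarith

end Alternation

/-! ### Contraction with a covector -/

section Contraction

variable {n p : ℕ} {u : (Fin (p + 1) → Fin n) → ℂ}

/-- The contraction of `u` with the vector with components `ξ l`; for `ξ = ∂r` this is the system
`Σ_l (∂r/∂z_l) u_{lJ}`, which vanishes exactly when `u` is tangential to the level sets of `r`. -/
def contraction (ξ : Fin n → ℂ) (u : (Fin (p + 1) → Fin n) → ℂ) (J : Fin p → Fin n) : ℂ :=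
  ∑ l, ξ l * u (Fin.cons l J)

lemma contraction_sub (ξ : Fin n → ℂ) (u v : (Fin (p + 1) → Fin n) → ℂ) :
    contraction ξ (u - v) = contraction ξ u - contraction ξ v := by
  funext J
  simp [contraction, mul_sub]

lemma contraction_smul (a : ℂ) (ξ : Fin n → ℂ) (u : (Fin (p + 1) → Fin n) → ℂ) :
    contraction (a • ξ) u = a • contraction ξ u := by
  funext J
  simp [contraction, Finset.mul_sum, mul_assoc]

lemma IsCoeff.contraction (hu : IsCoeff u) (ξ : Fin n → ℂ) : IsCoeff (contraction ξ u) := by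
  intro σ J
  simp only [HM.contraction, Finset.mul_sum]
  refine Finset.sum_congr rfl fun l _ => ?_
  linear_combination ξ l * hu.cons l σ J

lemma norm_contraction_le (ξ : Fin n → ℂ) (u : (Fin (p + 1) → Fin n) → ℂ) :
    ‖contraction ξ u‖ ≤ n * (‖ξ‖ * ‖u‖) := by
  refine (pi_norm_le_iff_of_nonneg (by positivity)).2 fun J => (norm_sum_le _ _).trans ?_
  refine (Finset.sum_le_card_nsmul _ _ (‖ξ‖ * ‖u‖) fun l _ => ?_).trans (by simp)
  rw [norm_mul]
  gcongr <;> exact norm_le_pi_norm _ _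

lemma IsCoeff.cons_update_comm (hu : IsCoeff u) (J : Fin p → Fin n) (j : Fin p) (l m : Fin n) :
    u (Fin.cons m (update J j l)) = -u (Fin.cons l (update J j m)) := by
  have hswap : (Fin.cons l (update J j m) : Fin (p + 1) → Fin n) ∘ swap 0 j.succ =
      Fin.cons m (update J j l) := by
    rw [← Fin.cons_self_tail (_ ∘ _), tail_comp_swap]
    simp
  rw [← hswap, hu, Perm.sign_swap (Fin.succ_ne_zero j).symm]
  simp

lemma IsCoeff.sum_mul_contraction_update (hu : IsCoeff u) (ξ : Fin n → ℂ) (J : Fin p → Fin n)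
    (j : Fin p) : ∑ l, ξ l * HM.contraction ξ u (update J j l) = 0 := by
  have h : ∑ l, ξ l * HM.contraction ξ u (update J j l) =
      -∑ l, ξ l * HM.contraction ξ u (update J j l) := by
    simp only [HM.contraction, Finset.mul_sum]
    conv_lhs => rw [Finset.sum_comm]
    rw [← Finset.sum_neg_distrib]
    refine Finset.sum_congr rfl fun l _ => ?_
    rw [← Finset.sum_neg_distrib]
    exact Finset.sum_congr rfl fun m _ => by rw [hu.cons_update_comm J j m l]; ring
  exact self_eq_neg.1 h

lemma contraction_alternate_mul (ξ η : Fin n → ℂ) (w : (Fin p → Fin n) → ℂ) (J : Fin p → Fin n) :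
    contraction ξ (alternate fun k J => η k * w J) J =
      (∑ l, ξ l * η l) * w J - ∑ j, η (J j) * ∑ l, ξ l * w (update J j l) := by
  simp only [contraction, alternate_cons, mul_sub, Finset.sum_sub_distrib, Finset.mul_sum,
    Finset.sum_mul, mul_assoc]
  rw [Finset.sum_comm]
  simp only [mul_left_comm]

lemma norm_alternate_le {W : Fin n → (Fin p → Fin n) → ℂ} {B : ℝ} (hB : 0 ≤ B)
    (hW : ∀ k J, ‖W k J‖ ≤ B) : ‖alternate W‖ ≤ (p + 1) * B := by
  refine (pi_norm_le_iff_of_nonneg (by positivity)).2 fun M => ?_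
  calc ‖alternate W M‖ ≤ B + ∑ _j : Fin p, B :=
        (norm_sub_le _ _).trans <| add_le_add (hW _ _) <|
          (norm_sum_le _ _).trans <| Finset.sum_le_sum fun j _ => hW _ _
    _ = (p + 1) * B := by simp; ring

/-- The normal component `|ξ|⁻² ξ̄ ∧ (ξ ⌟ u)` of `u`, so that `u - normalPart ξ u` is tangential
when `ξ ≠ 0`. -/
noncomputable def normalPart (ξ : Fin n → ℂ) (u : (Fin (p + 1) → Fin n) → ℂ) :
    (Fin (p + 1) → Fin n) → ℂ :=
  ((∑ l, ‖ξ l‖ ^ 2 : ℝ) : ℂ)⁻¹ • alternate fun k J => star (ξ k) * contraction ξ u J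

lemma IsCoeff.normalPart (hu : IsCoeff u) (ξ : Fin n → ℂ) : IsCoeff (normalPart ξ u) :=
  (isCoeff_alternate fun k => (hu.contraction ξ).const_smul (star (ξ k))).const_smul _

lemma contraction_normalPart (hu : IsCoeff u) {ξ : Fin n → ℂ} (hξ : 0 < ∑ l, ‖ξ l‖ ^ 2) :
    contraction ξ (normalPart ξ u) = contraction ξ u := by
  funext J
  have hnorm : ((∑ l, ‖ξ l‖ ^ 2 : ℝ) : ℂ) = ∑ l, ξ l * star (ξ l) := by
    simp [Complex.mul_conj']
  calc contraction ξ (normalPart ξ u) J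
      = ((∑ l, ‖ξ l‖ ^ 2 : ℝ) : ℂ)⁻¹ *
          contraction ξ (alternate fun k J => star (ξ k) * contraction ξ u J) J := by
        simp only [contraction, normalPart, Pi.smul_apply, smul_eq_mul, Finset.mul_sum,
          mul_left_comm]
    _ = contraction ξ u J := by
        simp only [contraction_alternate_mul, hu.sum_mul_contraction_update, ← hnorm, mul_zero,
          Finset.sum_const_zero, sub_zero]
        exact inv_mul_cancel_left₀ (Complex.ofReal_ne_zero.2 hξ.ne') _

lemma norm_normalPart_le (ξ : Fin n → ℂ) (u : (Fin (p + 1) → Fin n) → ℂ) :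
    ‖normalPart ξ u‖ ≤ (∑ l, ‖ξ l‖ ^ 2)⁻¹ * ((p + 1) * (‖ξ‖ * ‖contraction ξ u‖)) := by
  rw [normalPart, norm_smul, norm_inv, Complex.norm_real, Real.norm_of_nonneg (by positivity)]
  gcongr
  refine norm_alternate_le (by positivity) fun k J => ?_
  rw [norm_mul, norm_star]
  gcongr <;> exact norm_le_pi_norm _ _

end Contraction

/-! ### Hermitian forms on coefficient systems -/

section HermitianForm

variable {n p q : ℕ} {H : Matrix (Fin n) (Fin n) ℂ}

lemma mForm_add_left (u u' v : (Fin q → Fin n) → ℂ) :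
    mForm q H (u + u') v = mForm q H u v + mForm q H u' v := by
  simp [mForm, mul_add, add_mul, Finset.sum_add_distrib]

lemma mForm_add_right (u v v' : (Fin q → Fin n) → ℂ) :
    mForm q H u (v + v') = mForm q H u v + mForm q H u v' := by
  simp [mForm, mul_add, Finset.sum_add_distrib]

lemma norm_mForm_le {B : ℝ} (hH : ∀ l k, ‖H l k‖ ≤ B) (u v : (Fin q → Fin n) → ℂ) :
    ‖mForm q H u v‖ ≤ (Incr n (q - 1)).card * n ^ 2 * B * (‖u‖ * ‖v‖) := by
  have hterm (J : Fin (q - 1) → Fin n) (k l : Fin n) :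
      ‖H l k * u (cons' q l J) * star (v (cons' q k J))‖ ≤ B * (‖u‖ * ‖v‖) := by
    rw [norm_mul, norm_mul, norm_star, mul_assoc]
    have hB : 0 ≤ B := (norm_nonneg _).trans (hH l k)
    gcongr
    exacts [hH l k, norm_le_pi_norm _ _, norm_le_pi_norm _ _]
  calc ‖mForm q H u v‖ ≤ ∑ _J ∈ Incr n (q - 1), ∑ _k : Fin n, ∑ _l : Fin n, B * (‖u‖ * ‖v‖) :=
        norm_sum_le_of_le _ fun J _ => norm_sum_le_of_le _ fun k _ => norm_sum_le_of_le _ fun l _ =>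
          hterm J k l
    _ = _ := by simp; ring

lemma mForm_smul_add_smul (a b : ℂ) (H H' : Matrix (Fin n) (Fin n) ℂ)
    (u v : (Fin q → Fin n) → ℂ) :
    mForm q (a • H + b • H') u v = a * mForm q H u v + b * mForm q H' u v := by
  simp [mForm, Finset.mul_sum, ← Finset.sum_add_distrib, add_mul, mul_assoc]

lemma mForm_vecMulVec (ξ : Fin n → ℂ) (u : (Fin (p + 1) → Fin n) → ℂ) :
    mForm (p + 1) (Matrix.vecMulVec ξ (star ξ)) u u = nSq (contraction ξ u) := by
  have hsq (J : Fin p → Fin n) : ((‖contraction ξ u J‖ : ℂ)) ^ 2 =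
      ∑ k, ∑ l, ξ l * star (ξ k) * u (Fin.cons l J) * star (u (Fin.cons k J)) := by
    rw [← Complex.mul_conj', ← Complex.star_def]
    simp only [contraction, star_sum, star_mul', Finset.sum_mul, Finset.mul_sum]
    exact Finset.sum_congr rfl fun k _ => Finset.sum_congr rfl fun l _ => by ring
  simp [mForm, nSq, Matrix.vecMulVec_apply, cons'_succ, hsq]

lemma neg_le_re_mForm {ξ : Fin n → ℂ} {u : (Fin (p + 1) → Fin n) → ℂ} (hu : IsCoeff u)
    (hξ : 0 < ∑ l, ‖ξ l‖ ^ 2)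
    (hpos : ∀ v, IsCoeff v → contraction ξ v = 0 → 0 ≤ (mForm (p + 1) H v v).re)
    {K E D : ℝ} (hK : 0 ≤ K) (hH : ∀ u v, ‖mForm (p + 1) H u v‖ ≤ K * (‖u‖ * ‖v‖)) (hE : 0 ≤ E)
    (he : ‖normalPart ξ u‖ ≤ E * ‖contraction ξ u‖) (hD : ‖contraction ξ u‖ ≤ D * ‖u‖) :
    -(K * E * (2 + E * D) * (‖contraction ξ u‖ * ‖u‖)) ≤ (mForm (p + 1) H u u).re := by
  set w := ‖contraction ξ u‖
  set e := normalPart ξ u with he_def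
  have hpos_sub : 0 ≤ (mForm (p + 1) H (u - e) (u - e)).re :=
    hpos _ (hu.sub (he_def ▸ hu.normalPart ξ)) <| by
      rw [contraction_sub, he_def, contraction_normalPart hu hξ, sub_self]
  have hsub : ‖u - e‖ ≤ (1 + E * D) * ‖u‖ :=
    calc ‖u - e‖ ≤ ‖u‖ + E * (D * ‖u‖) := norm_sub_le_of_le le_rfl (he.trans (by gcongr))
      _ = _ := by ring
  have hsub_nonneg : 0 ≤ (1 + E * D) * ‖u‖ := (norm_nonneg _).trans hsub
  have hsplit : mForm (p + 1) H u u =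
      mForm (p + 1) H (u - e) (u - e) + (mForm (p + 1) H (u - e) e + mForm (p + 1) H e u) := by
    rw [← add_assoc, ← mForm_add_right, sub_add_cancel, ← mForm_add_left, sub_add_cancel]
  have hcross : ‖mForm (p + 1) H (u - e) e + mForm (p + 1) H e u‖ ≤
      K * E * (2 + E * D) * (w * ‖u‖) :=
    calc _ ≤ K * (‖u - e‖ * ‖e‖) + K * (‖e‖ * ‖u‖) := norm_add_le_of_le (hH _ _) (hH _ _)
      _ ≤ K * ((1 + E * D) * ‖u‖ * (E * w)) + K * (E * w * ‖u‖) := by gcongr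
      _ = _ := by ring
  rw [hsplit, Complex.add_re]
  linarith [neg_le_of_abs_le ((Complex.abs_re_le_norm _).trans hcross)]

-- Splitting off the normal part makes the error linear in the contraction instead of quadratic in
-- `u`, which is what a weight `t ^ (s - 2)` can absorb.
lemma exists_neg_le_re_mForm (n p : ℕ) {ε : ℝ} (hε : 0 < ε) (X B : ℝ) :
    ∃ G, ∀ (ξ : Fin n → ℂ) (H : Matrix (Fin n) (Fin n) ℂ) (u : (Fin (p + 1) → Fin n) → ℂ),
      IsCoeff u → ε ≤ ∑ l, ‖ξ l‖ ^ 2 → ‖ξ‖ ≤ X → (∀ l k, ‖H l k‖ ≤ B) →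
      (∀ v, IsCoeff v → contraction ξ v = 0 → 0 ≤ (mForm (p + 1) H v v).re) →
      -(G * (‖contraction ξ u‖ * ‖u‖)) ≤ (mForm (p + 1) H u u).re := by
  refine ⟨_, fun ξ H u hu hεξ hX hH hpos =>
    neg_le_re_mForm (K := (Incr n p).card * n ^ 2 * |B|) (E := ε⁻¹ * ((p + 1) * |X|))
      (D := n * |X|) hu (hε.trans_le hεξ) hpos (by positivity)
      (norm_mForm_le fun l k => (hH l k).trans (le_abs_self B)) (by positivity) ?_ ?_⟩
  · have hX' : ‖ξ‖ ≤ |X| := hX.trans (le_abs_self X)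
    calc ‖normalPart ξ u‖ ≤ (∑ l, ‖ξ l‖ ^ 2)⁻¹ * ((p + 1) * (‖ξ‖ * ‖contraction ξ u‖)) :=
          norm_normalPart_le ξ u
      _ ≤ ε⁻¹ * ((p + 1) * (|X| * ‖contraction ξ u‖)) := by gcongr
      _ = _ := by ring
  · calc ‖contraction ξ u‖ ≤ n * (‖ξ‖ * ‖u‖) := norm_contraction_le ξ u
      _ ≤ n * (|X| * ‖u‖) := by gcongr; exact hX.trans (le_abs_self X)
      _ = _ := by ring

end HermitianForm

/-! ### The complex Hessian of `-(-r)^s` -/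

section HessianOfPower

variable {n p : ℕ}

/-- The complex Hessian of `-(-r) ^ s` at a point where `-r = t`, `∂r = ξ` and `H` is the complex
Hessian of `r`. -/
noncomputable def powHessian (s t : ℝ) (ξ : Fin n → ℂ) (H : Matrix (Fin n) (Fin n) ℂ) :
    Matrix (Fin n) (Fin n) ℂ :=
  ((s * (1 - s) * t ^ (s - 2) : ℝ) : ℂ) • Matrix.vecMulVec ξ (star ξ) +
    ((s * t ^ (s - 1) : ℝ) : ℂ) • H

lemma re_mForm_powHessian (s t : ℝ) (ξ : Fin n → ℂ) (H : Matrix (Fin n) (Fin n) ℂ)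
    (u : (Fin (p + 1) → Fin n) → ℂ) :
    (mForm (p + 1) (powHessian s t ξ H) u u).re =
      s * (1 - s) * t ^ (s - 2) * nSq (contraction ξ u) +
        s * t ^ (s - 1) * (mForm (p + 1) H u u).re := by
  rw [powHessian, mForm_smul_add_smul, mForm_vecMulVec, Complex.add_re, Complex.re_ofReal_mul,
    Complex.re_ofReal_mul, Complex.ofReal_re]

lemma rpow_eq_rpow_sub_two_mul_sq {t : ℝ} (ht : 0 < t) (s : ℝ) : t ^ s = t ^ (s - 2) * t ^ 2 := by
  rw [← Real.rpow_natCast, ← Real.rpow_add ht]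
  norm_num

lemma rpow_sub_one_eq_rpow_sub_two_mul {t : ℝ} (ht : 0 < t) (s : ℝ) :
    t ^ (s - 1) = t ^ (s - 2) * t := by
  rw [← Real.rpow_add_one ht.ne']
  ring_nf

lemma rpow_sub_one_mul_le {s : ℝ} (hs : s ∈ Set.Ioo (0 : ℝ) 1) {t : ℝ} (ht : 0 < t)
    (G w v : ℝ) :
    s * t ^ (s - 1) * (G * (w * v)) ≤
      s * (1 - s) / 2 * (t ^ (s - 2) * w ^ 2) + s * G ^ 2 / (2 * (1 - s)) * (t ^ s * v ^ 2) := by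
  obtain ⟨hs0, hs1⟩ := hs
  have : 0 < 1 - s := sub_pos.2 hs1
  rw [rpow_sub_one_eq_rpow_sub_two_mul ht, rpow_eq_rpow_sub_two_mul_sq ht s, ← sub_nonneg]
  have hsq : 0 ≤ s * t ^ (s - 2) * (((1 - s) * w - G * (t * v)) ^ 2 / (2 * (1 - s))) := by
    positivity
  convert hsq using 1
  field_simp
  ring

lemma rpow_mul_nSq_contraction_le_of_neg_le {s c t G : ℝ} (hs : s ∈ Set.Ioo (0 : ℝ) 1)
    (hc : 0 < c) (ht : 0 < t) {ξ : Fin n → ℂ} {H : Matrix (Fin n) (Fin n) ℂ}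
    {u : (Fin (p + 1) → Fin n) → ℂ} (hu : IsCoeff u)
    (hpos : c * t ^ s * nSq u ≤ (mForm (p + 1) (powHessian s t ξ H) u u).re)
    (hG : -(G * (‖contraction ξ u‖ * ‖u‖)) ≤ (mForm (p + 1) H u u).re) :
    s * (1 - s) / 2 * (t ^ (s - 2) * nSq (contraction ξ u)) ≤
      (1 + s * G ^ 2 / (2 * (1 - s) * c)) * (mForm (p + 1) (powHessian s t ξ H) u u).re := by
  have hs0 : 0 < s := hs.1
  have hs1 : 0 < 1 - s := sub_pos.2 hs.2
  rw [re_mForm_powHessian] at *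
  set Y := nSq (contraction ξ u)
  set Q := s * (1 - s) * t ^ (s - 2) * Y + s * t ^ (s - 1) * (mForm (p + 1) H u u).re
  have hcross := rpow_sub_one_mul_le hs ht G ‖contraction ξ u‖ ‖u‖
  have hw : t ^ (s - 2) * ‖contraction ξ u‖ ^ 2 ≤ t ^ (s - 2) * Y := by
    gcongr
    exact (hu.contraction ξ).norm_sq_le_nSq
  have hv : t ^ s * ‖u‖ ^ 2 ≤ Q / c := by
    rw [le_div_iff₀ hc]
    calc t ^ s * ‖u‖ ^ 2 * c ≤ t ^ s * nSq u * c := by gcongr; exact hu.norm_sq_le_nSq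
      _ ≤ Q := by linarith
  have hlower : -(s * t ^ (s - 1) * (G * (‖contraction ξ u‖ * ‖u‖))) ≤
      s * t ^ (s - 1) * (mForm (p + 1) H u u).re := by
    rw [← mul_neg]
    gcongr
  calc s * (1 - s) / 2 * (t ^ (s - 2) * Y)
      = Q - s * (1 - s) / 2 * (t ^ (s - 2) * Y) - s * t ^ (s - 1) * (mForm (p + 1) H u u).re := by
        ring
    _ ≤ Q + s * G ^ 2 / (2 * (1 - s)) * (t ^ s * ‖u‖ ^ 2) := by
        have := mul_le_mul_of_nonneg_left hw (by positivity : 0 ≤ s * (1 - s) / 2)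
        linarith
    _ ≤ Q + s * G ^ 2 / (2 * (1 - s)) * (Q / c) := by gcongr
    _ = _ := by field_simp

lemma rpow_mul_nSq_contraction_le_of_le_sq {s c ε t : ℝ} (hc : 0 < c) (hε : 0 < ε) (ht : 0 < t)
    (hεt : ε ≤ t ^ 2) {ξ : Fin n → ℂ} {H : Matrix (Fin n) (Fin n) ℂ}
    {u : (Fin (p + 1) → Fin n) → ℂ} (hu : IsCoeff u)
    (hpos : c * t ^ s * nSq u ≤ (mForm (p + 1) (powHessian s t ξ H) u u).re) :
    t ^ (s - 2) * nSq (contraction ξ u) ≤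
      (Incr n p).card * (n * ‖ξ‖) ^ 2 / (ε * c) *
        (mForm (p + 1) (powHessian s t ξ H) u u).re := by
  have hY : nSq (contraction ξ u) ≤ (Incr n p).card * (n * ‖ξ‖) ^ 2 * nSq u :=
    calc nSq (contraction ξ u) ≤ (Incr n p).card * ‖contraction ξ u‖ ^ 2 :=
          nSq_le_card_mul_norm_sq _
      _ ≤ (Incr n p).card * (n * (‖ξ‖ * ‖u‖)) ^ 2 := by gcongr; exact norm_contraction_le ξ u
      _ = (Incr n p).card * (n * ‖ξ‖) ^ 2 * ‖u‖ ^ 2 := by ring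
      _ ≤ _ := by gcongr; exact hu.norm_sq_le_nSq
  have hweight : t ^ (s - 2) ≤ t ^ s / ε := by
    rw [le_div_iff₀ hε, rpow_eq_rpow_sub_two_mul_sq ht s]
    gcongr
  calc t ^ (s - 2) * nSq (contraction ξ u)
      ≤ t ^ s / ε * ((Incr n p).card * (n * ‖ξ‖) ^ 2 * nSq u) :=
        mul_le_mul hweight hY (nSq_nonneg _) (by positivity)
    _ = (Incr n p).card * (n * ‖ξ‖) ^ 2 / (ε * c) * (c * t ^ s * nSq u) := by field_simp
    _ ≤ _ := by gcongr

lemma nonneg_re_mForm_of_contraction_eq_zero {s c t : ℝ} (hs0 : 0 < s) (hc : 0 ≤ c) (ht : 0 < t)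
    {ξ : Fin n → ℂ} {H : Matrix (Fin n) (Fin n) ℂ} {v : (Fin (p + 1) → Fin n) → ℂ}
    (hpos : c * t ^ s * nSq v ≤ (mForm (p + 1) (powHessian s t ξ H) v v).re)
    (hv : contraction ξ v = 0) : 0 ≤ (mForm (p + 1) H v v).re := by
  rw [re_mForm_powHessian, hv] at hpos
  have h0 : nSq (0 : (Fin p → Fin n) → ℂ) = 0 := by simp [nSq]
  rw [h0, mul_zero, zero_add] at hpos
  have hlhs : 0 ≤ c * t ^ s * nSq v := mul_nonneg (by positivity) (nSq_nonneg v)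
  exact nonneg_of_mul_nonneg_right (hlhs.trans hpos) (by positivity)

lemma exists_rpow_mul_nSq_contraction_le (n p : ℕ) {s c ε : ℝ} (hs : s ∈ Set.Ioo (0 : ℝ) 1)
    (hc : 0 < c) (hε : 0 < ε) (X B : ℝ) :
    ∃ M > 0, ∀ (t : ℝ) (ξ : Fin n → ℂ) (H : Matrix (Fin n) (Fin n) ℂ), 0 < t →
      ε ≤ max (∑ l, ‖ξ l‖ ^ 2) (t ^ 2) → ‖ξ‖ ≤ X → (∀ l k, ‖H l k‖ ≤ B) →
      (∀ v : (Fin (p + 1) → Fin n) → ℂ, IsCoeff v →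
        c * t ^ s * nSq v ≤ (mForm (p + 1) (powHessian s t ξ H) v v).re) →
      ∀ u : (Fin (p + 1) → Fin n) → ℂ, IsCoeff u →
        t ^ (s - 2) * nSq (contraction ξ u) ≤
          M * (mForm (p + 1) (powHessian s t ξ H) u u).re := by
  obtain ⟨G, hG⟩ := exists_neg_le_re_mForm n p hε X B
  have hs0 : 0 < s := hs.1
  have hs1 : 0 < 1 - s := sub_pos.2 hs.2
  set M₁ := (1 + s * G ^ 2 / (2 * (1 - s) * c)) / (s * (1 - s) / 2)
  set M₂ := (Incr n p).card * (n * X) ^ 2 / (ε * c)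
  refine ⟨max M₁ M₂, lt_max_of_lt_left (by positivity), fun t ξ H ht hεξ hX hH hpos u hu => ?_⟩
  set Q := (mForm (p + 1) (powHessian s t ξ H) u u).re with hQ_def
  have hQ : 0 ≤ Q :=
    (mul_nonneg (by positivity) (nSq_nonneg u) : 0 ≤ c * t ^ s * nSq u).trans (hpos u hu)
  rcases le_max_iff.1 hεξ with hξ | hεt
  · have h := rpow_mul_nSq_contraction_le_of_neg_le hs hc ht hu (hpos u hu) <|
      hG ξ H u hu hξ hX hH fun v hv =>
        nonneg_re_mForm_of_contraction_eq_zero hs0 hc.le ht (hpos v hv)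
    calc _ ≤ M₁ * Q := by
          rw [div_mul_eq_mul_div, le_div_iff₀ (by positivity), mul_comm]
          exact h
      _ ≤ _ := by gcongr; exact le_max_left _ _
  · calc _ ≤ (Incr n p).card * (n * ‖ξ‖) ^ 2 / (ε * c) * Q :=
          rpow_mul_nSq_contraction_le_of_le_sq hc hε ht hεt hu (hpos u hu)
      _ ≤ M₂ * Q := by simp only [M₂]; gcongr
      _ ≤ _ := by gcongr; exact le_max_right _ _

end HessianOfPower

/-! ### Wirtinger calculus -/

section Wirtinger

variable {n : ℕ} {z : Fin n → ℂ}

section Complex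

variable {f g : (Fin n → ℂ) → ℂ}

lemma contDiffAt_fderiv_apply {k m : WithTop ℕ∞} (hf : ContDiffAt ℝ k f z)
    (hmk : m + 1 ≤ k) (v : Fin n → ℂ) : ContDiffAt ℝ m (fun w => fderiv ℝ f w v) z :=
  (hf.fderiv_right hmk).clm_apply contDiffAt_const

lemma contDiffAt_dz {k m : WithTop ℕ∞} (hf : ContDiffAt ℝ k f z) (hmk : m + 1 ≤ k) (j : Fin n) :
    ContDiffAt ℝ m (dz f j) z :=
  contDiffAt_const.mul <| (contDiffAt_fderiv_apply hf hmk _).sub <|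
    contDiffAt_const.mul (contDiffAt_fderiv_apply hf hmk _)

lemma contDiffAt_dzbar {k m : WithTop ℕ∞} (hf : ContDiffAt ℝ k f z) (hmk : m + 1 ≤ k)
    (j : Fin n) : ContDiffAt ℝ m (dzbar f j) z :=
  contDiffAt_const.mul <| (contDiffAt_fderiv_apply hf hmk _).add <|
    contDiffAt_const.mul (contDiffAt_fderiv_apply hf hmk _)

lemma dz_mul (hf : DifferentiableAt ℝ f z) (hg : DifferentiableAt ℝ g z) (k : Fin n) :
    dz (fun w => f w * g w) k z = dz f k z * g z + f z * dz g k z := by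
  simp only [dz, fderiv_fun_mul hf hg, add_apply, smul_apply, smul_eq_mul]
  ring

lemma dzbar_mul (hf : DifferentiableAt ℝ f z) (hg : DifferentiableAt ℝ g z) (k : Fin n) :
    dzbar (fun w => f w * g w) k z = dzbar f k z * g z + f z * dzbar g k z := by
  simp only [dzbar, fderiv_fun_mul hf hg, add_apply, smul_apply, smul_eq_mul]
  ring

lemma dz_star (k : Fin n) : dz (fun w => star (f w)) k z = star (dzbar f k z) := by
  simp only [dz, dzbar, fderiv_star]
  simp
  ring

lemma dzbar_star (k : Fin n) : dzbar (fun w => star (f w)) k z = star (dz f k z) := by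
  simp only [dz, dzbar, fderiv_star]
  simp

lemma dz_dzbar_comm (hf : ContDiffAt ℝ 2 f z) (k l : Fin n) :
    dz (dzbar f k) l z = dzbar (dz f l) k z := by
  have hsymm : IsSymmSndFDerivAt ℝ f z := hf.isSymmSndFDerivAt (by simp)
  have hd : DifferentiableAt ℝ (fderiv ℝ f) z :=
    (hf.fderiv_right (m := 1) (by norm_num)).differentiableAt one_ne_zero
  have hd_apply (v : Fin n → ℂ) : DifferentiableAt ℝ (fun w => fderiv ℝ f w v) z :=
    hd.clm_apply (differentiableAt_const _)
  have hsnd (v w : Fin n → ℂ) :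
      fderiv ℝ (fun y => fderiv ℝ f y v) z w = fderiv ℝ (fderiv ℝ f) z w v := by
    simp [fderiv_clm_apply hd (differentiableAt_const v)]
  have hdzbar (w : Fin n → ℂ) : fderiv ℝ (dzbar f k) z w = 1 / 2 *
      (fderiv ℝ (fderiv ℝ f) z w (Pi.single k 1) +
        Complex.I * fderiv ℝ (fderiv ℝ f) z w (Pi.single k Complex.I)) := by
    unfold dzbar
    rw [fderiv_const_mul ((hd_apply _).fun_add ((hd_apply _).const_mul _)),
      fderiv_fun_add (hd_apply _) ((hd_apply _).const_mul _), fderiv_const_mul (hd_apply _)]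
    simp [hsnd, mul_add]
  have hdz (w : Fin n → ℂ) : fderiv ℝ (dz f l) z w = 1 / 2 *
      (fderiv ℝ (fderiv ℝ f) z w (Pi.single l 1) -
        Complex.I * fderiv ℝ (fderiv ℝ f) z w (Pi.single l Complex.I)) := by
    unfold dz
    rw [fderiv_const_mul ((hd_apply _).fun_sub ((hd_apply _).const_mul _)),
      fderiv_fun_sub (hd_apply _) ((hd_apply _).const_mul _), fderiv_const_mul (hd_apply _)]
    simp [hsnd]
  rw [dz, dzbar, hdzbar, hdzbar, hdz, hdz, hsymm (Pi.single k 1), hsymm (Pi.single k 1),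
    hsymm (Pi.single k Complex.I), hsymm (Pi.single k Complex.I)]
  ring

end Complex

section Real

variable {r : (Fin n → ℂ) → ℝ}

/-- The vector `∂r/∂z_l` of Wirtinger derivatives of a real-valued function. -/
noncomputable def gradW (r : (Fin n → ℂ) → ℝ) (z : Fin n → ℂ) : Fin n → ℂ :=
  fun l => dz (fun w => (r w : ℂ)) l z

/-- The complex Hessian `∂²r/∂z_l∂z̄_k`, with row index `l` and column index `k` as in `mForm`. -/
noncomputable def leviMatrix (r : (Fin n → ℂ) → ℝ) (z : Fin n → ℂ) : Matrix (Fin n) (Fin n) ℂ :=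
  Matrix.of fun l k => hessW r l k z

lemma hForm_eq_mForm (q : ℕ) (u : (Fin q → Fin n) → ℂ) :
    hForm q r u z = mForm q (leviMatrix r z) u u := rfl

lemma contDiffAt_ofReal_comp {k : WithTop ℕ∞} (hr : ContDiffAt ℝ k r z) :
    ContDiffAt ℝ k (fun w => (r w : ℂ)) z :=
  Complex.ofRealCLM.contDiff.contDiffAt.comp z hr

lemma continuousAt_gradW (hr : ContDiffAt ℝ 1 r z) : ContinuousAt (gradW r) z :=
  continuousAt_pi.2 fun l =>
    (contDiffAt_dz (m := 0) (contDiffAt_ofReal_comp hr) (by norm_num) l).continuousAt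

lemma continuousAt_hessW (hr : ContDiffAt ℝ 2 r z) (l k : Fin n) :
    ContinuousAt (hessW r l k) z :=
  (contDiffAt_dz (m := 0) (contDiffAt_dzbar (m := 1) (contDiffAt_ofReal_comp hr)
    (by norm_num) k) (by norm_num) l).continuousAt

lemma fderiv_ofReal_comp (hr : DifferentiableAt ℝ r z) (v : Fin n → ℂ) :
    fderiv ℝ (fun w => (r w : ℂ)) z v = fderiv ℝ r z v := by
  have h : HasFDerivAt (fun w => (r w : ℂ)) (Complex.ofRealCLM ∘L fderiv ℝ r z) z :=
    Complex.ofRealCLM.hasFDerivAt.comp z hr.hasFDerivAt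
  simp [h.fderiv]

lemma dzbar_ofReal_comp (k : Fin n) :
    dzbar (fun w => (r w : ℂ)) k z = star (gradW r z k) := by
  rw [gradW, ← dzbar_star]
  simp

lemma fderiv_eq_zero_of_gradW_eq_zero (hr : DifferentiableAt ℝ r z) (h : gradW r z = 0) :
    fderiv ℝ r z = 0 := by
  have hsingle (l : Fin n) :
      fderiv ℝ r z (Pi.single l 1) = 0 ∧ fderiv ℝ r z (Pi.single l Complex.I) = 0 := by
    have hl : gradW r z l = 0 := congrFun h l
    simpa [gradW, dz, fderiv_ofReal_comp hr, Complex.ext_iff] using hl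
  ext v
  have hv : v = ∑ l, ((v l).re • (Pi.single l (1 : ℂ) : Fin n → ℂ) +
      (v l).im • (Pi.single l Complex.I : Fin n → ℂ)) := by
    funext j
    simp [Finset.sum_apply, Pi.single_apply, Finset.sum_add_distrib]
  rw [hv, map_sum]
  simp [map_add, map_smul, hsingle]

lemma gradW_comp {φ : ℝ → ℝ} {φ' : ℝ} (hφ : HasDerivAt φ φ' (r z))
    (hr : DifferentiableAt ℝ r z) : gradW (fun w => φ (r w)) z = (φ' : ℂ) • gradW r z := by
  have h : HasFDerivAt (fun w => φ (r w)) (φ' • fderiv ℝ r z) z :=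
    hφ.comp_hasFDerivAt z hr.hasFDerivAt
  funext l
  simp only [gradW, dz, fderiv_ofReal_comp hr, fderiv_ofReal_comp h.differentiableAt, h.fderiv,
    Pi.smul_apply, smul_apply, smul_eq_mul, Complex.ofReal_mul]
  ring

lemma hessW_comp {φ φ' : ℝ → ℝ} {φ'' : ℝ} (hφ : ∀ᶠ x in 𝓝 (r z), HasDerivAt φ (φ' x) x)
    (hφ' : HasDerivAt φ' φ'' (r z)) (hr : ContDiffAt ℝ 2 r z) (l k : Fin n) :
    hessW (fun w => φ (r w)) l k z =
      φ'' * (gradW r z l * star (gradW r z k)) + φ' (r z) * hessW r l k z := by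
  have hd : DifferentiableAt ℝ r z := hr.differentiableAt two_ne_zero
  have hcomp : (fun w => dzbar (fun y => (φ (r y) : ℂ)) k w) =ᶠ[𝓝 z]
      fun w => (φ' (r w) : ℂ) * dzbar (fun y => (r y : ℂ)) k w := by
    filter_upwards [hd.continuousAt.eventually hφ,
      (hr.eventually (by simp)).mono fun w hw => hw.differentiableAt two_ne_zero] with w hw hrw
    simp [dzbar_ofReal_comp, gradW_comp hw hrw]
  have hd' : DifferentiableAt ℝ (fun w => (φ' (r w) : ℂ)) z :=
    Complex.ofRealCLM.differentiableAt.comp z (hφ'.differentiableAt.comp z hd)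
  have hdbar : DifferentiableAt ℝ (dzbar (fun y => (r y : ℂ)) k) z :=
    (contDiffAt_dzbar (m := 1) (contDiffAt_ofReal_comp hr) (by norm_num) k).differentiableAt
      one_ne_zero
  have hgrad : dz (fun w => (φ' (r w) : ℂ)) l z = φ'' * gradW r z l :=
    congrFun (gradW_comp hφ' hd) l
  rw [hessW, dz, hcomp.fderiv_eq, ← dz, dz_mul hd' hdbar, hgrad, dzbar_ofReal_comp, hessW]
  ring

lemma hasDerivAt_neg_neg_rpow {x : ℝ} (hx : x < 0) (s : ℝ) :
    HasDerivAt (fun y => -(-y) ^ s) (s * (-x) ^ (s - 1)) x :=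
  ((hasDerivAt_neg x).rpow_const (p := s) (Or.inl (neg_pos.2 hx).ne')).neg.congr_deriv
    (by ring)

lemma hasDerivAt_mul_neg_rpow_sub_one {x : ℝ} (hx : x < 0) (s : ℝ) :
    HasDerivAt (fun y => s * (-y) ^ (s - 1)) (s * (1 - s) * (-x) ^ (s - 2)) x := by
  refine (((hasDerivAt_neg x).rpow_const (p := s - 1)
    (Or.inl (neg_pos.2 hx).ne')).const_mul s).congr_deriv ?_
  rw [show s - 1 - 1 = s - 2 by ring]
  ring

lemma gradW_neg_neg_rpow (hr : DifferentiableAt ℝ r z) (hz : r z < 0) (s : ℝ) :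
    gradW (fun w => -(-r w) ^ s) z = ((s * (-r z) ^ (s - 1) : ℝ) : ℂ) • gradW r z :=
  gradW_comp (hasDerivAt_neg_neg_rpow hz s) hr

lemma leviMatrix_neg_neg_rpow (hr : ContDiffAt ℝ 2 r z) (hz : r z < 0) (s : ℝ) :
    leviMatrix (fun w => -(-r w) ^ s) z = powHessian s (-r z) (gradW r z) (leviMatrix r z) := by
  ext l k
  have hφ : ∀ᶠ x in 𝓝 (r z), HasDerivAt (fun y => -(-y) ^ s) (s * (-x) ^ (s - 1)) x :=
    (eventually_lt_nhds hz).mono fun x hx => hasDerivAt_neg_neg_rpow hx s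
  simpa [leviMatrix, powHessian, Matrix.vecMulVec_apply] using
    hessW_comp hφ (hasDerivAt_mul_neg_rpow_sub_one hz s) hr l k

end Real

end Wirtinger

/-! ### Test functions -/

section TestFunction

/-- Complex-valued `C^m` functions with compact support contained in `Ω`. -/
structure IsTestFunction {E : Type*} [NormedAddCommGroup E] [NormedSpace ℝ E] (m : WithTop ℕ∞)
    (Ω : Set E) (f : E → ℂ) : Prop where
  contDiff : ContDiff ℝ m f
  hasCompactSupport : HasCompactSupport f
  tsupport_subset : tsupport f ⊆ Ω

namespace IsTestFunction

section NormedSpace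

variable {E : Type*} [NormedAddCommGroup E] [NormedSpace ℝ E] {m k : WithTop ℕ∞} {Ω : Set E}
  {f g : E → ℂ}

lemma of_le (hf : IsTestFunction m Ω f) (hkm : k ≤ m) : IsTestFunction k Ω f :=
  ⟨hf.contDiff.of_le hkm, hf.hasCompactSupport, hf.tsupport_subset⟩

lemma of_support_subset (hf : IsTestFunction k Ω f) (hg : ContDiff ℝ m g)
    (hgf : support g ⊆ tsupport f) : IsTestFunction m Ω g where
  contDiff := hg
  hasCompactSupport := hf.hasCompactSupport.mono' hgf
  tsupport_subset := (closure_minimal hgf (isClosed_tsupport f)).trans hf.tsupport_subset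

lemma add (hf : IsTestFunction m Ω f) (hg : IsTestFunction m Ω g) :
    IsTestFunction m Ω fun z => f z + g z where
  contDiff := hf.contDiff.add hg.contDiff
  hasCompactSupport := hf.hasCompactSupport.add hg.hasCompactSupport
  tsupport_subset :=
    (tsupport_add f g).trans (Set.union_subset hf.tsupport_subset hg.tsupport_subset)

lemma sum {ι : Type*} {S : Finset ι} {f : ι → E → ℂ} (hf : ∀ i ∈ S, IsTestFunction m Ω (f i)) :
    IsTestFunction m Ω fun z => ∑ i ∈ S, f i z := by
  rw [← Finset.sum_fn]
  exact Finset.sum_induction f (IsTestFunction m Ω) (fun _ _ => .add)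
    ⟨contDiff_const, .zero, by simp [tsupport_zero]⟩ hf

lemma star (hf : IsTestFunction m Ω f) : IsTestFunction m Ω fun z => star (f z) where
  contDiff := (starL' ℝ : ℂ ≃L[ℝ] ℂ).contDiff.comp hf.contDiff
  hasCompactSupport := hf.hasCompactSupport.comp_left (g := Star.star) (star_zero ℂ)
  tsupport_subset :=
    (closure_mono (support_comp_subset (g := Star.star) (star_zero ℂ) f)).trans
      hf.tsupport_subset

lemma mul_left (hf : ∀ z ∈ Ω, ContDiffAt ℝ m f z) (hg : IsTestFunction m Ω g) :
    IsTestFunction m Ω fun z => f z * g z where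
  contDiff := contDiff_iff_contDiffAt.2 fun z => by
    by_cases hz : z ∈ tsupport g
    · exact (hf z (hg.tsupport_subset hz)).mul hg.contDiff.contDiffAt
    · have hfg : z ∉ tsupport fun w => f w * g w := fun h => hz (tsupport_mul_subset_right h)
      exact contDiffAt_const.congr_of_eventuallyEq (notMem_tsupport_iff_eventuallyEq.1 hfg)
  hasCompactSupport := hg.hasCompactSupport.mul_left
  tsupport_subset := tsupport_mul_subset_right.trans hg.tsupport_subset

variable [MeasurableSpace E] [BorelSpace E] (μ : Measure E)

section FiniteOnCompacts

variable [IsFiniteMeasureOnCompacts μ]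

lemma integrable_mul_norm_sq {φ : E → ℝ} (hφ : ContinuousOn φ Ω)
    (hf : IsTestFunction m Ω f) : Integrable (fun z => φ z * ‖f z‖ ^ 2) μ := by
  have hsupport : support (fun z => φ z * ‖f z‖ ^ 2) ⊆ tsupport f := fun z hz =>
    subset_tsupport f fun hfz => hz (by simp [hfz])
  rw [← integrableOn_iff_integrable_of_support_subset hsupport]
  exact ContinuousOn.integrableOn_compact hf.hasCompactSupport <|
    (hφ.mono hf.tsupport_subset).mul (hf.contDiff.continuous.norm.pow 2).continuousOn

lemma integrable (hf : IsTestFunction m Ω f) : Integrable f μ :=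
  hf.contDiff.continuous.integrable_of_hasCompactSupport hf.hasCompactSupport

lemma integrable_fderiv (hf : IsTestFunction 1 Ω f) (v : E) :
    Integrable (fun z => fderiv ℝ f z v) μ :=
  ((hf.contDiff.continuous_fderiv one_ne_zero).clm_apply
    continuous_const).integrable_of_hasCompactSupport (hf.hasCompactSupport.fderiv_apply ℝ v)

end FiniteOnCompacts

variable [FiniteDimensional ℝ E] [μ.IsAddHaarMeasure]

lemma integral_fderiv_eq_zero (hf : IsTestFunction 1 Ω f) (v : E) :
    ∫ z, fderiv ℝ f z v ∂μ = 0 := by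
  simpa using integral_mul_fderiv_eq_neg_fderiv_mul_of_integrable (μ := μ) (f := fun _ => (1 : ℂ))
    (g := f) (v := v) (by simp) (by simpa using hf.integrable_fderiv μ v)
    (by simpa using hf.integrable μ)
    (by simp) fun z _ => hf.contDiff.differentiable one_ne_zero z

lemma setIntegral_fderiv_eq_zero (hf : IsTestFunction 1 Ω f) (v : E) :
    ∫ z in Ω, fderiv ℝ f z v ∂μ = 0 := by
  rw [setIntegral_eq_integral_of_forall_compl_eq_zero, hf.integral_fderiv_eq_zero μ v]
  intro z hz
  rw [fderiv_of_notMem_tsupport ℝ fun h => hz (hf.tsupport_subset h), zero_apply]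

end NormedSpace

variable {n : ℕ} {m : WithTop ℕ∞} {Ω : Set (Fin n → ℂ)} {f : (Fin n → ℂ) → ℂ}

lemma dz (hf : IsTestFunction (m + 1) Ω f) (k : Fin n) : IsTestFunction m Ω (dz f k) :=
  hf.of_support_subset
    (contDiff_iff_contDiffAt.2 fun _ => contDiffAt_dz hf.contDiff.contDiffAt le_rfl k)
    fun z hz => by
      contrapose! hz
      simp [HM.dz, fderiv_of_notMem_tsupport ℝ hz]

lemma dzbar (hf : IsTestFunction (m + 1) Ω f) (k : Fin n) : IsTestFunction m Ω (dzbar f k) :=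
  hf.of_support_subset
    (contDiff_iff_contDiffAt.2 fun _ => contDiffAt_dzbar hf.contDiff.contDiffAt le_rfl k)
    fun z hz => by
      contrapose! hz
      simp [HM.dzbar, fderiv_of_notMem_tsupport ℝ hz]

lemma integrableOn_dz (hf : IsTestFunction 1 Ω f) (k : Fin n) : IntegrableOn (HM.dz f k) Ω :=
  ((dz (m := 0) (by simpa using hf) k).integrable volume).integrableOn

lemma integrableOn_dzbar (hf : IsTestFunction 1 Ω f) (k : Fin n) :
    IntegrableOn (HM.dzbar f k) Ω :=
  ((dzbar (m := 0) (by simpa using hf) k).integrable volume).integrableOn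

lemma setIntegral_dz_eq_zero (hf : IsTestFunction 1 Ω f) (k : Fin n) :
    ∫ z in Ω, HM.dz f k z = 0 := by
  unfold HM.dz
  have h (v : Fin n → ℂ) := (hf.integrable_fderiv volume v).integrableOn (s := Ω)
  have hzero (v : Fin n → ℂ) := hf.setIntegral_fderiv_eq_zero volume v
  rw [integral_const_mul, integral_sub (h _) ((h _).const_mul _), integral_const_mul,
    hzero, hzero]
  simp

lemma setIntegral_dzbar_eq_zero (hf : IsTestFunction 1 Ω f) (k : Fin n) :
    ∫ z in Ω, HM.dzbar f k z = 0 := by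
  unfold HM.dzbar
  have h (v : Fin n → ℂ) := (hf.integrable_fderiv volume v).integrableOn (s := Ω)
  have hzero (v : Fin n → ℂ) := hf.setIntegral_fderiv_eq_zero volume v
  rw [integral_const_mul, integral_add (h _) ((h _).const_mul _), integral_const_mul,
    hzero, hzero]
  simp

end IsTestFunction

end TestFunction

/-! ### The Morrey trick -/

section Morrey

variable {n : ℕ} {Ω : Set (Fin n → ℂ)} {h : (Fin n → ℂ) → ℝ} {v : Fin n → (Fin n → ℂ) → ℂ}

/-- The divergence produced by commuting `∂/∂z_l` past `∂/∂z̄_k` in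
`Σ_{k,l} h (∂v_l/∂z̄_k) conj(∂v_k/∂z̄_l)`: it integrates to zero when `v` is compactly supported. -/
noncomputable def morreyDiv (h : (Fin n → ℂ) → ℝ) (v : Fin n → (Fin n → ℂ) → ℂ)
    (z : Fin n → ℂ) : ℂ :=
  ∑ k, ∑ l, (dz (fun w => h w * (dzbar (v l) k w * star (v k w))) l z -
    dzbar (fun w => h w * (dz (v l) l w * star (v k w))) k z -
    dzbar (fun w => gradW h w l * (v l w * star (v k w))) k z)

lemma dz_mul_mul_star {f g φ : (Fin n → ℂ) → ℂ} {z : Fin n → ℂ} (hf : DifferentiableAt ℝ f z)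
    (hg : DifferentiableAt ℝ g z) (hφ : DifferentiableAt ℝ φ z) (l : Fin n) :
    dz (fun w => f w * (g w * star (φ w))) l z =
      dz f l z * g z * star (φ z) + f z * dz g l z * star (φ z) +
        f z * g z * star (dzbar φ l z) := by
  rw [dz_mul hf (hg.fun_mul hφ.star), dz_mul hg hφ.star, dz_star]
  ring

lemma dzbar_mul_mul_star {f g φ : (Fin n → ℂ) → ℂ} {z : Fin n → ℂ} (hf : DifferentiableAt ℝ f z)
    (hg : DifferentiableAt ℝ g z) (hφ : DifferentiableAt ℝ φ z) (k : Fin n) :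
    dzbar (fun w => f w * (g w * star (φ w))) k z =
      dzbar f k z * g z * star (φ z) + f z * dzbar g k z * star (φ z) +
        f z * g z * star (dz φ k z) := by
  rw [dzbar_mul hf (hg.fun_mul hφ.star), dzbar_mul hg hφ.star, dzbar_star]
  ring

lemma morreyDiv_eq {z : Fin n → ℂ} (hh : ContDiffAt ℝ 2 h z)
    (hv : ∀ k, ContDiffAt ℝ 2 (v k) z) :
    morreyDiv h v z = h z * (∑ k, ∑ l, dzbar (v l) k z * star (dzbar (v k) l z) -
        (∑ l, dz (v l) l z) * star (∑ l, dz (v l) l z)) -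
      (∑ l, dz (v l) l z) * star (∑ l, gradW h z l * v l z) -
      (∑ l, gradW h z l * v l z) * star (∑ l, dz (v l) l z) -
      ∑ k, ∑ l, hessW h l k z * v l z * star (v k z) := by
  have hh' : ContDiffAt ℝ 2 (fun w => (h w : ℂ)) z := contDiffAt_ofReal_comp hh
  have hd {f : (Fin n → ℂ) → ℂ} (hf : ContDiffAt ℝ 2 f z) : DifferentiableAt ℝ f z :=
    hf.differentiableAt two_ne_zero
  have hdz {f : (Fin n → ℂ) → ℂ} (hf : ContDiffAt ℝ 2 f z) (l : Fin n) :
      DifferentiableAt ℝ (dz f l) z :=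
    (contDiffAt_dz (m := 1) hf (by norm_num) l).differentiableAt one_ne_zero
  have hdzbar {f : (Fin n → ℂ) → ℂ} (hf : ContDiffAt ℝ 2 f z) (l : Fin n) :
      DifferentiableAt ℝ (dzbar f l) z :=
    (contDiffAt_dzbar (m := 1) hf (by norm_num) l).differentiableAt one_ne_zero
  have hterm (k l : Fin n) :
      dz (fun w => h w * (dzbar (v l) k w * star (v k w))) l z -
        dzbar (fun w => h w * (dz (v l) l w * star (v k w))) k z -
        dzbar (fun w => gradW h w l * (v l w * star (v k w))) k z =
      h z * (dzbar (v l) k z * star (dzbar (v k) l z) - dz (v l) l z * star (dz (v k) k z)) -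
        dz (v l) l z * star (gradW h z k * v k z) -
        gradW h z l * v l z * star (dz (v k) k z) - hessW h l k z * v l z * star (v k z) := by
    have hhess : hessW h l k z = dzbar (fun w => gradW h w l) k z := dz_dzbar_comm hh' k l
    have hgrad : DifferentiableAt ℝ (fun w => gradW h w l) z := hdz hh' l
    rw [dz_mul_mul_star (hd hh') (hdzbar (hv l) k) (hd (hv k)),
      dzbar_mul_mul_star (hd hh') (hdz (hv l) l) (hd (hv k)),
      dzbar_mul_mul_star hgrad (hd (hv l)) (hd (hv k)),
      dz_dzbar_comm (hv l), dzbar_ofReal_comp, hhess, star_mul', ← gradW]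
    ring
  have hprod (a b : Fin n → ℂ) :
      (∑ l, a l) * star (∑ k, b k) = ∑ k, ∑ l, a l * star (b k) := by
    rw [star_sum, Finset.sum_mul_sum, Finset.sum_comm]
  simp only [morreyDiv, hterm, hprod, Finset.sum_sub_distrib, Finset.mul_sum, mul_sub]

lemma isTestFunction_mul_mul_star {f g : (Fin n → ℂ) → ℂ} {k : Fin n}
    (hf : ∀ z ∈ Ω, ContDiffAt ℝ 1 f z) (hg : ∀ z ∈ Ω, ContDiffAt ℝ 1 g z)
    (hv : IsTestFunction 2 Ω (v k)) : IsTestFunction 1 Ω fun z => f z * (g z * star (v k z)) :=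
  .mul_left hf (.mul_left hg (hv.of_le one_le_two).star)

lemma integrableOn_morreyDiv_and_setIntegral_eq_zero (hh : ∀ z ∈ Ω, ContDiffAt ℝ 2 h z)
    (hv : ∀ k, IsTestFunction 2 Ω (v k)) :
    IntegrableOn (morreyDiv h v) Ω ∧ ∫ z in Ω, morreyDiv h v z = 0 := by
  have hh₁ (z) (hz : z ∈ Ω) : ContDiffAt ℝ 1 (fun w => (h w : ℂ)) z :=
    contDiffAt_ofReal_comp ((hh z hz).of_le one_le_two)
  have hgrad (l : Fin n) (z) (hz : z ∈ Ω) : ContDiffAt ℝ 1 (fun w => gradW h w l) z :=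
    contDiffAt_dz (contDiffAt_ofReal_comp (hh z hz)) (by norm_num) l
  have hv₂ (l : Fin n) (z) : ContDiffAt ℝ 2 (v l) z := (hv l).contDiff.contDiffAt
  have h₁ (k l : Fin n) := isTestFunction_mul_mul_star hh₁
    (fun z _ => contDiffAt_dzbar (hv₂ l z) (by norm_num) k) (hv k)
  have h₂ (k l : Fin n) := isTestFunction_mul_mul_star hh₁
    (fun z _ => contDiffAt_dz (hv₂ l z) (by norm_num) l) (hv k)
  have h₃ (k l : Fin n) := isTestFunction_mul_mul_star (hgrad l)
    (fun z _ => (hv₂ l z).of_le one_le_two) (hv k)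
  have hint₁₂ (k l : Fin n) :=
    ((h₁ k l).integrableOn_dz l).fun_sub ((h₂ k l).integrableOn_dzbar k)
  have hint (k l : Fin n) := (hint₁₂ k l).fun_sub ((h₃ k l).integrableOn_dzbar k)
  refine ⟨integrable_finsetSum _ fun k _ => integrable_finsetSum _ fun l _ => hint k l, ?_⟩
  unfold morreyDiv
  rw [integral_finsetSum _ fun k _ => integrable_finsetSum _ fun l _ => hint k l]
  refine Finset.sum_eq_zero fun k _ => ?_
  rw [integral_finsetSum _ fun l _ => hint k l]
  refine Finset.sum_eq_zero fun l _ => ?_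
  rw [integral_sub (hint₁₂ k l) ((h₃ k l).integrableOn_dzbar k),
    integral_sub ((h₁ k l).integrableOn_dz l) ((h₂ k l).integrableOn_dzbar k),
    (h₁ k l).setIntegral_dz_eq_zero, (h₂ k l).setIntegral_dzbar_eq_zero,
    (h₃ k l).setIntegral_dzbar_eq_zero, sub_zero, sub_zero]

end Morrey

/-! ### The Kohn–Morrey–Hörmander inequality -/

section KohnMorrey

variable {n q p : ℕ} {z : Fin n → ℂ}

lemma IsCoeff.dzbar {u : (Fin q → Fin n) → (Fin n → ℂ) → ℂ} (hu : ∀ w, IsCoeff fun I => u I w)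
    (hd : ∀ I, DifferentiableAt ℝ (u I) z) (k : Fin n) : IsCoeff fun I => dzbar (u I) k z := by
  intro σ I
  beta_reduce
  have hσ : u (I ∘ σ) = fun w => (Equiv.Perm.sign σ : ℂ) * u I w := funext fun w => hu w σ I
  rw [hσ, dzbar_mul (differentiableAt_const _) (hd I)]
  simp [HM.dzbar]

lemma dbarSq_eq_nSq_alternate {u : (Fin q → Fin n) → (Fin n → ℂ) → ℂ}
    (hu : ∀ w, IsCoeff fun I => u I w) (hd : ∀ I, DifferentiableAt ℝ (u I) z) :
    dbarSq q u z = nSq (alternate fun k J => dzbar (u J) k z) := by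
  refine Finset.sum_congr rfl fun M hM => ?_
  rw [← sum_permSign_cons_eq_alternate (IsCoeff.dzbar hu hd) (mem_Incr_iff.1 hM).injective]
  simp only [dbarC, cons'_succ]

variable {u : (Fin (p + 1) → Fin n) → (Fin n → ℂ) → ℂ}

lemma re_morreyDiv_fin_cons {h : (Fin n → ℂ) → ℝ} (hu : ∀ I, ContDiffAt ℝ 2 (u I) z)
    (hh : ContDiffAt ℝ 2 h z) (K : Fin p → Fin n) :
    (morreyDiv h (fun l => u (Fin.cons l K)) z).re =
      h z * ((∑ k, ∑ l, dzbar (u (Fin.cons l K)) k z *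
        star (dzbar (u (Fin.cons k K)) l z)).re - ‖thetaC (p + 1) u K z‖ ^ 2) +
      2 * (contraction (gradW h z) (fun I => u I z) K * star (thetaC (p + 1) u K z)).re -
      (∑ k, ∑ l, hessW h l k z * u (Fin.cons l K) z * star (u (Fin.cons k K) z)).re := by
  have htheta : thetaC (p + 1) u K z = -∑ l, dz (u (Fin.cons l K)) l z := by
    simp only [thetaC, cons'_succ]
  rw [morreyDiv_eq hh fun l => hu _, htheta, Complex.sq_norm, Complex.normSq_apply]
  simp only [contraction, Complex.sub_re, Complex.mul_re, Complex.mul_im, Complex.ofReal_re,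
    Complex.ofReal_im, Complex.star_def, Complex.conj_re, Complex.conj_im, Complex.neg_re,
    Complex.neg_im, Complex.sub_im]
  ring

lemma thetaSq_eq_nSq (u : (Fin (p + 1) → Fin n) → (Fin n → ℂ) → ℂ) (z : Fin n → ℂ) :
    thetaSq (p + 1) u z = nSq fun K : Fin p → Fin n => thetaC (p + 1) u K z := rfl

/-- The divergence term of the Kohn–Morrey–Hörmander identity for the form `u` with weight `h`. -/
noncomputable def formDiv (h : (Fin n → ℂ) → ℝ) (u : (Fin (p + 1) → Fin n) → (Fin n → ℂ) → ℂ)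
    (z : Fin n → ℂ) : ℝ :=
  (∑ K ∈ Incr n p, morreyDiv h (fun l => u (Fin.cons l K)) z).re

lemma re_hForm_le {h : (Fin n → ℂ) → ℝ} (hu : ∀ w, IsCoeff fun I => u I w)
    (hu₂ : ∀ I, ContDiffAt ℝ 2 (u I) z) (hh : ContDiffAt ℝ 2 h z) (hz : h z ≤ 0) :
    (hForm (p + 1) h (fun I => u I z) z).re ≤
      -h z * (dbarSq (p + 1) u z + thetaSq (p + 1) u z) +
        2 * ∑ K ∈ Incr n p,
          (contraction (gradW h z) (fun I => u I z) K * star (thetaC (p + 1) u K z)).re -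
        formDiv h u z := by
  have hdbar := neg_re_sum_le_nSq_alternate
    (IsCoeff.dzbar hu fun I => (hu₂ I).differentiableAt two_ne_zero)
  rw [← dbarSq_eq_nSq_alternate hu fun I => (hu₂ I).differentiableAt two_ne_zero] at hdbar
  have hdiv := Finset.sum_congr rfl fun K (_ : K ∈ Incr n p) => re_morreyDiv_fin_cons hu₂ hh K
  simp only [Finset.sum_sub_distrib, Finset.sum_add_distrib, ← Finset.mul_sum] at hdiv
  have hform : (hForm (p + 1) h (fun I => u I z) z).re = ∑ K ∈ Incr n p,
      (∑ k, ∑ l, hessW h l k z * u (Fin.cons l K) z * star (u (Fin.cons k K) z)).re := by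
    simp only [hForm, cons'_succ, Complex.re_sum]
    rfl
  rw [Complex.re_sum] at hdbar
  rw [formDiv, Complex.re_sum, hform, thetaSq_eq_nSq, nSq]
  linarith [mul_le_mul_of_nonneg_left hdbar (neg_nonneg.2 hz)]

end KohnMorrey

/-! ### The weight `(-r)^s` -/

section Weight

variable {n p : ℕ} {z : Fin n → ℂ}

lemma two_mul_re_mul_star_le {t M : ℝ} (ht : 0 < t) (hM : 0 < M) (s : ℝ) (a b : ℂ) :
    2 * (s * t ^ (s - 1) * (a * star b).re) ≤
      (2 * M)⁻¹ * (t ^ (s - 2) * ‖a‖ ^ 2) + 2 * M * s ^ 2 * (t ^ s * ‖b‖ ^ 2) := by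
  have hsq : 0 ≤ (2 * M)⁻¹ * t ^ (s - 2) * ‖a - (2 * M * s * t : ℝ) * b‖ ^ 2 := by positivity
  rw [rpow_sub_one_eq_rpow_sub_two_mul ht, rpow_eq_rpow_sub_two_mul_sq ht s]
  refine sub_nonneg.1 (hsq.trans_eq ?_)
  simp only [Complex.sq_norm, Complex.normSq_apply, Complex.sub_re, Complex.sub_im,
    Complex.mul_re, Complex.mul_im, Complex.ofReal_re, Complex.ofReal_im, Complex.star_def,
    Complex.conj_re, Complex.conj_im]
  field_simp
  ring

lemma two_mul_sum_re_mul_star_le {t M : ℝ} (ht : 0 < t) (hM : 0 < M) (s : ℝ)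
    (a b : (Fin p → Fin n) → ℂ) :
    2 * ∑ K ∈ Incr n p, ((((s * t ^ (s - 1) : ℝ) : ℂ) • a) K * star (b K)).re ≤
      (2 * M)⁻¹ * (t ^ (s - 2) * nSq a) + 2 * M * s ^ 2 * (t ^ s * nSq b) := by
  simp only [nSq, Finset.mul_sum, ← Finset.sum_add_distrib]
  refine Finset.sum_le_sum fun K _ => ?_
  rw [Pi.smul_apply, smul_mul_assoc, smul_eq_mul, Complex.re_ofReal_mul]
  exact two_mul_re_mul_star_le ht hM s _ _

variable {r : (Fin n → ℂ) → ℝ} {u : (Fin (p + 1) → Fin n) → (Fin n → ℂ) → ℂ}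

lemma rpow_mul_nSq_contraction_le_of_le_mul_hForm {s M : ℝ} (hM : 0 < M)
    (hu : ∀ w, IsCoeff fun I => u I w) (hu₂ : ∀ I, ContDiffAt ℝ 2 (u I) z)
    (hr : ContDiffAt ℝ 2 r z) (hz : r z < 0)
    (hle : (-r z) ^ (s - 2) * nSq (contraction (gradW r z) fun I => u I z) ≤
      M * (hForm (p + 1) (fun w => -(-r w) ^ s) (fun I => u I z) z).re) :
    (-r z) ^ (s - 2) * nSq (contraction (gradW r z) fun I => u I z) ≤
      2 * M * ((-r z) ^ s * dbarSq (p + 1) u z +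
        (1 + 2 * M * s ^ 2) * ((-r z) ^ s * thetaSq (p + 1) u z) -
        formDiv (fun w => -(-r w) ^ s) u z) := by
  have hweight : ContDiffAt ℝ 2 (fun w => -(-r w) ^ s) z :=
    (hr.neg.rpow_const_of_ne (neg_pos.2 hz).ne').neg
  have hform := re_hForm_le hu hu₂ hweight
    (neg_nonpos.2 (Real.rpow_nonneg (neg_pos.2 hz).le s))
  have hcross := two_mul_sum_re_mul_star_le (neg_pos.2 hz) hM s
    (contraction (gradW r z) fun I => u I z) fun K => thetaC (p + 1) u K z
  rw [gradW_neg_neg_rpow (hr.differentiableAt two_ne_zero) hz, contraction_smul,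
    thetaSq_eq_nSq] at hform
  rw [thetaSq_eq_nSq]
  have hM' : M * ((2 * M)⁻¹ * ((-r z) ^ (s - 2) * nSq (contraction (gradW r z) fun I => u I z))) =
    (-r z) ^ (s - 2) * nSq (contraction (gradW r z) fun I => u I z) / 2 := by
    field_simp
  nlinarith [mul_le_mul_of_nonneg_left hcross hM.le, mul_le_mul_of_nonneg_left hform hM.le]

end Weight

/-! ### Integration over the domain -/

section Integration

variable {n q p : ℕ} {m : WithTop ℕ∞} {Ω : Set (Fin n → ℂ)} {r : (Fin n → ℂ) → ℝ}

lemma integrableOn_mul_nSq {φ : (Fin n → ℂ) → ℝ} (hφ : ContinuousOn φ Ω)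
    {w : (Fin q → Fin n) → (Fin n → ℂ) → ℂ} (hw : ∀ I, IsTestFunction m Ω (w I)) :
    IntegrableOn (fun z => φ z * nSq fun I => w I z) Ω := by
  simp only [nSq, Finset.mul_sum]
  exact integrable_finsetSum _ fun I _ =>
    ((hw I).integrable_mul_norm_sq volume hφ).integrableOn

lemma IsTestFunction.dbarC {u : (Fin q → Fin n) → (Fin n → ℂ) → ℂ}
    (hu : ∀ I, IsTestFunction (m + 1) Ω (u I)) (M : Fin (q + 1) → Fin n) :
    IsTestFunction m Ω (dbarC q u M) :=
  .sum fun k _ => .sum fun J _ => .mul_left (fun _ _ => contDiffAt_const) ((hu J).dzbar k)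

lemma IsTestFunction.thetaC {u : (Fin q → Fin n) → (Fin n → ℂ) → ℂ}
    (hu : ∀ I, IsTestFunction (m + 1) Ω (u I)) (J : Fin (q - 1) → Fin n) :
    IsTestFunction m Ω (thetaC q u J) := by
  have hsum : IsTestFunction m Ω fun z => ∑ l, HM.dz (u (cons' q l J)) l z :=
    .sum fun l _ => (hu _).dz l
  exact (funext fun z => neg_one_mul _ : _ = HM.thetaC q u J) ▸
    IsTestFunction.mul_left (f := fun _ => -1) (fun _ _ => contDiffAt_const) hsum

variable {u : (Fin (p + 1) → Fin n) → (Fin n → ℂ) → ℂ}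

lemma IsTestFunction.contraction_gradW (hr : ∀ z ∈ Ω, ContDiffAt ℝ (m + 1) r z)
    (hu : ∀ I, IsTestFunction m Ω (u I)) (J : Fin p → Fin n) :
    IsTestFunction m Ω fun z => contraction (gradW r z) (fun I => u I z) J :=
  .sum fun l _ => .mul_left (fun z hz => contDiffAt_dz (contDiffAt_ofReal_comp (hr z hz)) le_rfl l)
    (hu _)

lemma integrableOn_formDiv_and_setIntegral_eq_zero {h : (Fin n → ℂ) → ℝ}
    (hh : ∀ z ∈ Ω, ContDiffAt ℝ 2 h z) (hu : ∀ I, IsTestFunction 2 Ω (u I)) :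
    IntegrableOn (formDiv h u) Ω ∧ ∫ z in Ω, formDiv h u z = 0 := by
  have hdiv (K : Fin p → Fin n) :=
    integrableOn_morreyDiv_and_setIntegral_eq_zero hh fun l => hu (Fin.cons l K)
  have hsum : IntegrableOn (fun z => ∑ K ∈ Incr n p, morreyDiv h (fun l => u (Fin.cons l K)) z) Ω :=
    integrable_finsetSum _ fun K _ => (hdiv K).1
  refine ⟨hsum.re, (integral_re hsum).trans ?_⟩
  rw [integral_finsetSum _ fun K _ => (hdiv K).1, Finset.sum_eq_zero fun K _ => (hdiv K).2,
    map_zero]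

lemma setIntegral_rpow_mul_nSq_contraction_le {s M : ℝ} (hM : 0 < M) (hΩ : MeasurableSet Ω)
    (hr : ∀ z ∈ Ω, ContDiffAt ℝ 2 r z) (hneg : ∀ z ∈ Ω, r z < 0)
    (hle : ∀ z ∈ Ω, ∀ v : (Fin (p + 1) → Fin n) → ℂ, IsCoeff v →
      (-r z) ^ (s - 2) * nSq (contraction (gradW r z) v) ≤
        M * (hForm (p + 1) (fun w => -(-r w) ^ s) v z).re)
    (hu : ∀ z, IsCoeff fun I => u I z) (hu₂ : ∀ I, IsTestFunction 2 Ω (u I)) :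
    ∫ z in Ω, (-r z) ^ (s - 2) * nSq (contraction (gradW r z) fun I => u I z) ≤
      2 * M * (1 + 2 * M * s ^ 2) * ((∫ z in Ω, (-r z) ^ s * dbarSq (p + 1) u z) +
        ∫ z in Ω, (-r z) ^ s * thetaSq (p + 1) u z) := by
  have hpow (a : ℝ) (z) (hz : z ∈ Ω) : ContDiffAt ℝ 2 (fun w => (-r w) ^ a) z :=
    (hr z hz).neg.rpow_const_of_ne (neg_pos.2 (hneg z hz)).ne'
  have hpow_cont (a : ℝ) : ContinuousOn (fun w => (-r w) ^ a) Ω := fun z hz =>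
    (hpow a z hz).continuousAt.continuousWithinAt
  have hu₁ (I : Fin (p + 1) → Fin n) : IsTestFunction (0 + 1) Ω (u I) := (hu₂ I).of_le (by norm_num)
  have hN : IntegrableOn
      (fun z => (-r z) ^ (s - 2) * nSq (contraction (gradW r z) fun I => u I z)) Ω :=
    integrableOn_mul_nSq (hpow_cont _) <| IsTestFunction.contraction_gradW (m := 1)
      (fun z hz => (hr z hz).of_le (by norm_num)) fun I => (hu₂ I).of_le one_le_two
  have hD : IntegrableOn (fun z => (-r z) ^ s * dbarSq (p + 1) u z) Ω :=
    integrableOn_mul_nSq (hpow_cont s) (IsTestFunction.dbarC hu₁)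
  have hT : IntegrableOn (fun z => (-r z) ^ s * thetaSq (p + 1) u z) Ω :=
    integrableOn_mul_nSq (hpow_cont s) (IsTestFunction.thetaC hu₁)
  obtain ⟨hR, hR_zero⟩ := integrableOn_formDiv_and_setIntegral_eq_zero
    (fun z hz => (hpow s z hz).neg) hu₂
  have hD_nonneg : 0 ≤ ∫ z in Ω, (-r z) ^ s * dbarSq (p + 1) u z :=
    setIntegral_nonneg hΩ fun z hz =>
      mul_nonneg (Real.rpow_nonneg (neg_pos.2 (hneg z hz)).le s) (nSq_nonneg _)
  have hDT := hD.fun_add (hT.const_mul (1 + 2 * M * s ^ 2))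
  calc ∫ z in Ω, (-r z) ^ (s - 2) * nSq (contraction (gradW r z) fun I => u I z)
      ≤ ∫ z in Ω, 2 * M * ((-r z) ^ s * dbarSq (p + 1) u z +
          (1 + 2 * M * s ^ 2) * ((-r z) ^ s * thetaSq (p + 1) u z) -
          formDiv (fun w => -(-r w) ^ s) u z) :=
        setIntegral_mono_on hN ((hDT.fun_sub hR).const_mul _) hΩ fun z hz =>
          rpow_mul_nSq_contraction_le_of_le_mul_hForm hM hu
            (fun I => (hu₂ I).contDiff.contDiffAt) (hr z hz) (hneg z hz) (hle z hz _ (hu z))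
    _ = 2 * M * ((∫ z in Ω, (-r z) ^ s * dbarSq (p + 1) u z) +
          (1 + 2 * M * s ^ 2) * ∫ z in Ω, (-r z) ^ s * thetaSq (p + 1) u z) := by
        rw [integral_const_mul, integral_sub hDT hR, integral_add hD (hT.const_mul _),
          integral_const_mul, hR_zero, sub_zero]
    _ ≤ _ := by
        rw [mul_assoc _ (1 + 2 * M * s ^ 2), mul_add (1 + 2 * M * s ^ 2)]
        gcongr
        exact le_mul_of_one_le_left hD_nonneg (le_add_of_nonneg_right (by positivity))

end Integration

/-! ### Uniform constants on the closure -/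

section Compactness

variable {n p : ℕ} {Ω : Set (Fin n → ℂ)} {r : (Fin n → ℂ) → ℝ}

lemma exists_pos_le_max_norm_sq_gradW (hΩ : Bornology.IsBounded Ω)
    (hr : ∀ z ∈ closure Ω, ContDiffAt ℝ 1 r z)
    (hgrad : ∀ z ∈ closure Ω, r z = 0 → fderiv ℝ r z ≠ 0) :
    ∃ ε > 0, ∀ z ∈ closure Ω, ε ≤ max (∑ l, ‖gradW r z l‖ ^ 2) ((-r z) ^ 2) := by
  have hcont : ContinuousOn (fun z => max (∑ l, ‖gradW r z l‖ ^ 2) ((-r z) ^ 2)) (closure Ω) :=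
    fun z hz => by
      have hg := continuousAt_pi.1 (continuousAt_gradW (hr z hz))
      have hr_cont := (hr z hz).continuousAt
      exact ContinuousAt.continuousWithinAt (by fun_prop)
  refine hΩ.isCompact_closure.exists_forall_le' hcont fun z hz => ?_
  rcases eq_or_ne (r z) 0 with hrz | hrz
  · have hne : gradW r z ≠ 0 := fun h => hgrad z hz hrz <|
      fderiv_eq_zero_of_gradW_eq_zero ((hr z hz).differentiableAt one_ne_zero) h
    obtain ⟨l, hl⟩ := Function.ne_iff.1 hne
    exact lt_max_of_lt_left <| Finset.sum_pos' (fun _ _ => by positivity)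
      ⟨l, Finset.mem_univ l, pow_pos (norm_pos_iff.2 hl) 2⟩
  · exact lt_max_of_lt_right (sq_pos_of_ne_zero (neg_ne_zero.2 hrz))

lemma exists_rpow_mul_nSq_contraction_le_mul_hForm (hΩ : Bornology.IsBounded Ω)
    (hr : ∀ z ∈ closure Ω, ContDiffAt ℝ 2 r z) (hneg : ∀ z ∈ Ω, r z < 0)
    (hgrad : ∀ z ∈ closure Ω, r z = 0 → fderiv ℝ r z ≠ 0) {s c : ℝ}
    (hs : s ∈ Set.Ioo (0 : ℝ) 1) (hc : 0 < c)
    (hhess : ∀ z ∈ Ω, ∀ v : (Fin (p + 1) → Fin n) → ℂ, IsCoeff v →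
      c * (-r z) ^ s * nSq v ≤ (hForm (p + 1) (fun w => -(-r w) ^ s) v z).re) :
    ∃ M > 0, ∀ z ∈ Ω, ∀ v : (Fin (p + 1) → Fin n) → ℂ, IsCoeff v →
      (-r z) ^ (s - 2) * nSq (contraction (gradW r z) v) ≤
        M * (hForm (p + 1) (fun w => -(-r w) ^ s) v z).re := by
  have hr₁ (z) (hz : z ∈ closure Ω) : ContDiffAt ℝ 1 r z := (hr z hz).of_le one_le_two
  obtain ⟨ε, hε, hεle⟩ := exists_pos_le_max_norm_sq_gradW hΩ hr₁ hgrad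
  obtain ⟨X, hX⟩ := hΩ.isCompact_closure.exists_bound_of_continuousOn (f := gradW r)
    fun z hz => (continuousAt_gradW (hr₁ z hz)).continuousWithinAt
  have hhess_cont : ContinuousOn (fun z (a : Fin n × Fin n) => hessW r a.1 a.2 z) (closure Ω) :=
    continuousOn_pi.2 fun a z hz => (continuousAt_hessW (hr z hz) a.1 a.2).continuousWithinAt
  obtain ⟨B, hB⟩ := hΩ.isCompact_closure.exists_bound_of_continuousOn hhess_cont
  obtain ⟨M, hM, hle⟩ := exists_rpow_mul_nSq_contraction_le n p hs hc hε X B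
  refine ⟨M, hM, fun z hz v hv => ?_⟩
  have hz' := subset_closure hz
  have hform (v : (Fin (p + 1) → Fin n) → ℂ) : hForm (p + 1) (fun w => -(-r w) ^ s) v z =
      mForm (p + 1) (powHessian s (-r z) (gradW r z) (leviMatrix r z)) v v := by
    rw [hForm_eq_mForm, leviMatrix_neg_neg_rpow (hr z hz') (hneg z hz)]
  have hentry (l k : Fin n) : ‖leviMatrix r z l k‖ ≤ B :=
    (norm_le_pi_norm (fun a : Fin n × Fin n => hessW r a.1 a.2 z) (l, k)).trans (hB z hz')
  rw [hform]
  exact hle _ _ _ (neg_pos.2 (hneg z hz)) (hεle z hz') (hX z hz') hentry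
    (fun w hw => (hhess z hz w hw).trans_eq (congrArg Complex.re (hform w))) v hv

end Compactness

end HM

theorem dbar_hardy_inequality_general {n q : ℕ} (hq : 1 ≤ q) {Ω : Set (Fin n → ℂ)}
    (hΩ : MeasurableSet Ω) (hΩb : Bornology.IsBounded Ω) {r : (Fin n → ℂ) → ℝ}
    (hr : ∀ z ∈ closure Ω, ContDiffAt ℝ 2 r z) (hneg : ∀ z ∈ Ω, r z < 0)
    (hgrad : ∀ z ∈ closure Ω, r z = 0 → fderiv ℝ r z ≠ 0) {s c : ℝ}
    (hs : s ∈ Set.Ioo (0 : ℝ) 1) (hc : 0 < c)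
    (hhess : ∀ z ∈ Ω, ∀ u : (Fin q → Fin n) → ℂ, HM.IsCoeff u →
      c * (-r z) ^ s * HM.nSq u ≤ (HM.hForm q (fun w => -(-r w) ^ s) u z).re) :
    ∃ C > (0 : ℝ), ∀ u : (Fin q → Fin n) → (Fin n → ℂ) → ℂ,
      (∀ z, HM.IsCoeff fun I => u I z) → (∀ I, HM.IsTestFunction 2 Ω (u I)) →
      ∫ z in Ω, (-r z) ^ (s - 2) * ∑ J ∈ HM.Incr n (q - 1),
          ‖∑ l, HM.dz (fun w => (r w : ℂ)) l z * u (HM.cons' q l J) z‖ ^ 2 ≤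
        C * ((∫ z in Ω, (-r z) ^ s * HM.dbarSq q u z) +
          ∫ z in Ω, (-r z) ^ s * HM.thetaSq q u z) := by
  obtain ⟨p, rfl⟩ := Nat.exists_eq_add_of_le' hq
  obtain ⟨M, hM, hle⟩ :=
    HM.exists_rpow_mul_nSq_contraction_le_mul_hForm hΩb hr hneg hgrad hs hc hhess
  refine ⟨2 * M * (1 + 2 * M * s ^ 2), by positivity, fun u hu hu₂ => ?_⟩
  simp only [HM.cons'_succ]
  exact HM.setIntegral_rpow_mul_nSq_contraction_le hM hΩ
    (fun z hz => hr z (subset_closure hz)) hneg hle hu hu₂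

/-- the ∂̄-Hardy inequality (Proposition 3.3) for compactly supported
smooth (0,q)-forms. -/
theorem dbar_hardy_inequality (n q : ℕ) (hn : 1 ≤ n) (hq1 : 1 ≤ q) (hqn : q ≤ n)
    (Ω U : Set (Fin n → ℂ)) (hΩo : IsOpen Ω) (hΩb : Bornology.IsBounded Ω)
    (hU : IsOpen U) (hcl : closure Ω ⊆ U)
    (r : (Fin n → ℂ) → ℝ) (hr : ContDiffOn ℝ (⊤ : ℕ∞) r U)
    (hdef : Ω = {z | z ∈ U ∧ r z < 0})
    (hgrad : ∀ z ∈ U, r z = 0 → fderiv ℝ r z ≠ 0)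
    (s : ℝ) (hs : s ∈ Set.Ioo (0 : ℝ) 1)
    (c : ℝ) (hc : 0 < c)
    (hhess : ∀ z ∈ Ω, ∀ u : (Fin q → Fin n) → ℂ, HM.IsCoeff u →
      c * (-(r z)) ^ s * HM.nSq u ≤ (HM.hForm q (fun w => -((-(r w)) ^ s)) u z).re) :
    ∃ C > (0 : ℝ), ∀ u : (Fin q → Fin n) → (Fin n → ℂ) → ℂ,
      (∀ z, HM.IsCoeff (fun I => u I z)) → (∀ I, ContDiff ℝ (⊤ : ℕ∞) (u I)) →
      (∀ I, HasCompactSupport (u I)) → (∀ I, tsupport (u I) ⊆ Ω) →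
      (∫ z in Ω, (-(r z)) ^ (s - 2) * ∑ J ∈ HM.Incr n (q - 1),
          ‖∑ l : Fin n, HM.dz (fun w => ((r w : ℝ) : ℂ)) l z * u (HM.cons' q l J) z‖ ^ 2)
        ≤ C * ((∫ z in Ω, (-(r z)) ^ s * HM.dbarSq q u z)
            + (∫ z in Ω, (-(r z)) ^ s * HM.thetaSq q u z)) := by
  have htwo : (2 : WithTop ℕ∞) ≤ (⊤ : ℕ∞) := WithTop.coe_le_coe.2 (le_top (a := (2 : ℕ∞)))
  obtain ⟨C, hC, hle⟩ := dbar_hardy_inequality_general hq1 hΩo.measurableSet hΩb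
    (fun z hz => (hr.contDiffAt (hU.mem_nhds (hcl hz))).of_le htwo)
    (fun z hz => (hdef.subset hz).2) (fun z hz => hgrad z (hcl hz)) hs hc hhess
  exact ⟨C, hC, fun u hu hu_smooth hu_compact hu_supp => hle u hu fun I =>
    ⟨(hu_smooth I).of_le htwo, hu_compact I, hu_supp I⟩⟩
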